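/- Let n ≥ 3 and let w be a smooth solution of □w = F on ℝ₊ × ℝⁿ which vanishes for large |x| for each t. Then for every δ > 0 there is a constant C (independent of T and w) such that for all T > 0, ‖⟨x⟩^{−1/2−δ} w'‖_{L²_{t,x}([0,T]×ℝⁿ)} ≤ C ( ‖w'(0,·)‖_{L²(ℝⁿ)} + ∫₀^T ‖□w(s,·)‖_{L²(ℝⁿ)} ds ). -/

import Mathlib

/-!
The right hand side may be assumed finite; write `A` for the `L²` norm of `w'(0)`, `N` for the time
integral of the `L²` norm of `□w`, and `B = A + 2N`. The proof is by energy methods, with explicit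
divergence identities on space-time.

*Energy.* The energy current of `w` is multiplied by the cutoff `cut`, a decreasing function of
`⟨x⟩ + t`. Since `⟨x⟩` has gradient at most `1`, the terms with a derivative on the cutoff have a
favourable sign (`energy_div`), and the `L²` norm of `w'(t)` is at most `B` on `[0,T]`
(`energy_bound`). The cutoff is needed because the radius outside of which `w(t)` vanishes is not
assumed to be locally bounded in `t`.

*Hardy.* For each `t`, the `L²` norm of `(ρ² + |x|²)^{-1/2} w` is at most twice that of `∇w`
(`hardy`).

*Morawetz.* For each scale `ρ > 0` the equation is multiplied by `M = a · ∇w + b w`, where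
`a = x q`, `q = (ρ² + |x|²)^{-1/2}` and `b = (div a)/2 - ρ⁴ q⁵/(2n)`. The bulk term of the resulting
divergence identity (`morawetz_identity`) dominates `ρ⁴ q⁵ |w'|²/(2n)` when `n ≥ 3` (`mK_lower`); the
other terms are controlled by the energy and Hardy's inequality, and the error from the cutoff tends
to `0` as its radius grows. Hence the integral of `ρ⁴ q⁵ |w'|²` over `[0,T] × ℝⁿ` is at most a
dimensional constant times `B²`, uniformly in `ρ` and `T` (`morawetz`).

*Summation.* Where `2^k ≤ ⟨x⟩ < 2^{k+1}`, the weight `⟨x⟩^{-1-2δ}` is at most a constant times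
`2^{-2δk} ρ⁴ q⁵` with `ρ = 2^k` (`exists_scale`), and the geometric series of the coefficients
converges because `δ > 0` (`weighted_le`).
-/

open MeasureTheory Real Set
open scoped ENNReal FourierTransform

noncomputable section

/-- Euclidean space ℝⁿ. -/
abbrev Eu (n : ℕ) : Type := EuclideanSpace ℝ (Fin n)

/-- Spatial partial derivative ∂_i of a function on ℝⁿ. -/
def sd {n : ℕ} (i : Fin n) (h : Eu n → ℝ) : Eu n → ℝ :=
  fun x => fderiv ℝ h x (EuclideanSpace.single i 1)

/-- Iterated spatial derivatives ∂_x^μ. -/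
def sdIter {n : ℕ} : {m : ℕ} → (Fin m → Fin n) → (Eu n → ℝ) → Eu n → ℝ
  | 0, _, h => h
  | m + 1, μ, h => sd (μ 0) (sdIter (fun i : Fin m => μ i.succ) h)

/-- Time derivative ∂_t of u(t,x). -/
def td {n : ℕ} (u : ℝ → Eu n → ℝ) : ℝ → Eu n → ℝ :=
  fun t x => deriv (fun s => u s x) t

/-- Space-time partial derivative ∂_α, with ∂₀ = ∂_t. -/
def pd {n : ℕ} (α : Fin (n + 1)) (u : ℝ → Eu n → ℝ) : ℝ → Eu n → ℝ :=
  if h : α = 0 then td u else fun t x => sd (α.pred h) (u t) x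

/-- Iterated space-time derivatives ∂^μ. -/
def pdIter {n : ℕ} : {m : ℕ} → (Fin m → Fin (n + 1)) → (ℝ → Eu n → ℝ) → ℝ → Eu n → ℝ
  | 0, _, u => u
  | m + 1, μ, u => pd (μ 0) (pdIter (fun i : Fin m => μ i.succ) u)

/-- Iterated spatial derivatives of a space-time function. -/
def sdIterT {n m : ℕ} (μ : Fin m → Fin n) (u : ℝ → Eu n → ℝ) : ℝ → Eu n → ℝ :=
  fun t x => sdIter μ (u t) x

/-- The d'Alembertian □ = ∂_t² − Δ. -/
def dAlembert {n : ℕ} (u : ℝ → Eu n → ℝ) : ℝ → Eu n → ℝ :=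
  fun t x => td (td u) t x - ∑ i : Fin n, sd i (sd i (u t)) x

/-- |u'| : the magnitude of the space-time gradient (∂_t u, ∇_x u). -/
def gradMag {n : ℕ} (u : ℝ → Eu n → ℝ) : ℝ → Eu n → ℝ :=
  fun t x => Real.sqrt (∑ α : Fin (n + 1), pd α u t x ^ 2)

/-- Smoothness of a space-time function. -/
def SmoothTX {n : ℕ} (u : ℝ → Eu n → ℝ) : Prop :=
  ContDiff ℝ (⊤ : ℕ∞) fun p : ℝ × Eu n => u p.1 p.2

/-- L² norm over a region S ⊆ ℝⁿ. -/
def L2x {n : ℕ} (S : Set (Eu n)) (f : Eu n → ℝ) : ℝ≥0∞ :=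
  eLpNorm f 2 (volume.restrict S)

/-- Space-time L² norm over [0,T] × S. -/
def L2st {n : ℕ} (T : ℝ) (S : Set (Eu n)) (u : ℝ → Eu n → ℝ) : ℝ≥0∞ :=
  eLpNorm (fun p : ℝ × Eu n => u p.1 p.2) 2
    ((volume.restrict (Icc 0 T)).prod (volume.restrict S))

/-- Japanese bracket ⟨x⟩ = (1+|x|²)^{1/2}. -/
def jap {n : ℕ} (x : Eu n) : ℝ := Real.sqrt (1 + ‖x‖ ^ 2)

/-- Homogeneous Sobolev norm ‖f‖_{Ḣ^s} = ‖ |ξ|^s 𝓕f(ξ) ‖_{L²}. -/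
def sobolevHom {n : ℕ} (s : ℝ) (f : Eu n → ℝ) : ℝ≥0∞ :=
  eLpNorm (fun ξ : Eu n => ‖ξ‖ ^ s * ‖𝓕 (fun x : Eu n => (f x : ℂ)) ξ‖) 2 volume

/-- A smooth compact obstacle K = {ρ ≤ 0} given by a smooth defining function. -/
structure SmoothObstacle (n : ℕ) where
  ρ : Eu n → ℝ
  smooth : ContDiff ℝ (⊤ : ℕ∞) ρ
  K : Set (Eu n)
  K_def : K = {x | ρ x ≤ 0}
  compact : IsCompact K
  grad_ne : ∀ x, ρ x = 0 → fderiv ℝ ρ x ≠ 0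

/-- Ordered pairs (j,k), j < k, indexing the rotation fields Ω_{jk} on ℝ⁴. -/
abbrev OP : Type := {p : Fin 4 × Fin 4 // p.1 < p.2}

/-- Rotation vector field Ω_{jk} = x_j ∂_k − x_k ∂_j. -/
def rot (j k : Fin 4) (h : Eu 4 → ℝ) : Eu 4 → ℝ :=
  fun x => x j * sd k h x - x k * sd j h x

/-- Products Ω^μ of rotation vector fields. -/
def rotIter : {m : ℕ} → (Fin m → OP) → (Eu 4 → ℝ) → Eu 4 → ℝ
  | 0, _, h => h
  | m + 1, μ, h => rot (μ 0).1.1 (μ 0).1.2 (rotIter (fun i : Fin m => μ i.succ) h)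

/-- Radial derivative ∇_r = (x/|x|)·∇. -/
def radialD (h : Eu 4 → ℝ) : Eu 4 → ℝ :=
  fun x => fderiv ℝ h x (‖x‖⁻¹ • x)

/-- Iterated radial derivatives ∇_r^j. -/
def radialIter : ℕ → (Eu 4 → ℝ) → Eu 4 → ℝ
  | 0, h => h
  | j + 1, h => radialD (radialIter j h)

/-- Magnitude of the spatial gradient ∇_x h. -/
def spGradMag (h : Eu 4 → ℝ) : Eu 4 → ℝ :=
  fun x => Real.sqrt (∑ i : Fin 4, sd i h x ^ 2)

/-- Index set for the fields Z = {∂_α, Ω_{jk}}. -/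
abbrev ZIdx : Type := Fin 5 ⊕ OP

/-- Action of a single field Z. -/
def applyZ : ZIdx → (ℝ → Eu 4 → ℝ) → ℝ → Eu 4 → ℝ
  | Sum.inl α, u => pd (n := 4) α u
  | Sum.inr p, u => fun t x => rot p.1.1 p.1.2 (u t) x

/-- Products Z^μ of the fields Z. -/
def ZIter : {m : ℕ} → (Fin m → ZIdx) → (ℝ → Eu 4 → ℝ) → ℝ → Eu 4 → ℝ
  | 0, _, u => u
  | m + 1, μ, u => applyZ (μ 0) (ZIter (fun i : Fin m => μ i.succ) u)

/-- The perturbed d'Alembertian □_h φ = □φ + h^{αβ} ∂_α ∂_β φ. -/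
def boxH (h : Fin 5 → Fin 5 → ℝ → Eu 4 → ℝ) (φ : ℝ → Eu 4 → ℝ) : ℝ → Eu 4 → ℝ :=
  fun t x => dAlembert φ t x
    + ∑ α : Fin 5, ∑ β : Fin 5, h α β t x * pd (n := 4) α (pd (n := 4) β φ) t x

/-- |h| = Σ_{α,β} |h^{αβ}|. -/
def habs (h : Fin 5 → Fin 5 → ℝ → Eu 4 → ℝ) : ℝ → Eu 4 → ℝ :=
  fun t x => ∑ α : Fin 5, ∑ β : Fin 5, |h α β t x|

/-- |∂h| = Σ_{α,β,γ} |∂_γ h^{αβ}|. -/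
def dhabs (h : Fin 5 → Fin 5 → ℝ → Eu 4 → ℝ) : ℝ → Eu 4 → ℝ :=
  fun t x => ∑ γ : Fin 5, ∑ α : Fin 5, ∑ β : Fin 5, |pd (n := 4) γ (h α β) t x|

/-- Mixed norm ‖G‖_{L¹_t L¹_r L²_ω(ℝ₊×ℝ⁴)}. -/
def mixedNorm (G : ℝ → Eu 4 → ℝ) : ℝ≥0∞ :=
  ∫⁻ t in Ioi (0 : ℝ), ∫⁻ r in Ioi (0 : ℝ),
    eLpNorm (fun ω : Metric.sphere (0 : Eu 4) 1 => G t (r • (ω : Eu 4))) 2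
        (volume : Measure (Eu 4)).toSphere
      * ENNReal.ofReal (r ^ 3)

/-- The quantity M(T) (for `kmax = 50`) and A(T) (for `kmax = 49`) from the iteration. -/
def Mgen (kmax : ℕ) (Kc : Set (Eu 4)) (δ : ℝ) (u : ℝ → Eu 4 → ℝ) (T : ℝ) : ℝ≥0∞ :=
  (∑ m ∈ Finset.range (kmax + 1), ∑ μ : Fin m → Fin 5,
      ((⨆ t ∈ Icc (0 : ℝ) T, L2x Kc fun x => gradMag (pdIter (n := 4) μ u) t x)
        + L2st T Kc fun t x => jap x ^ (-(1/2 : ℝ) - δ) * gradMag (pdIter (n := 4) μ u) t x))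
  + (∑ m ∈ Finset.range kmax, ∑ μ : Fin m → ZIdx,
      ((L2st T Kc fun t x => jap x ^ (-(1/2 : ℝ) - δ) * gradMag (ZIter μ u) t x)
        + (L2st T (Kc ∩ {x : Eu 4 | 2 < ‖x‖}) fun t x =>
            jap x ^ (-(1/2 : ℝ) - 2*δ) * ZIter μ u t x)
        + ⨆ t ∈ Icc (0 : ℝ) T, L2x Kc fun x => gradMag (ZIter μ u) t x))
  + L2st T (Kc ∩ {x : Eu 4 | ‖x‖ < 3}) u

/-- The data (f,g) satisfy the compatibility conditions to infinite order for the
Dirichlet problem □u = Q(u) on the exterior of {ρ ≤ 0}: there is a smooth function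
attaining the data, vanishing on the boundary, and solving the equation
to infinite order at t = 0 (its Taylor coefficients at t = 0 are the formal ψ_k). -/
def CompatInfty {n : ℕ} (ρ : Eu n → ℝ) (f g : Eu n → ℝ)
    (Q : (ℝ → Eu n → ℝ) → ℝ → Eu n → ℝ) : Prop :=
  ∃ U : ℝ → Eu n → ℝ, SmoothTX U ∧ (∀ x, U 0 x = f x) ∧ (∀ x, td U 0 x = g x) ∧
    (∀ t x, ρ x = 0 → U t x = 0) ∧
    ∀ k : ℕ, ∀ x, 0 ≤ ρ x → td^[k] (fun s y => dAlembert U s y - Q U s y) 0 x = 0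

/-- The general quasilinear nonlinearity Q(u,u',u'') = A(u,u') + B^{αβ}(u,u') ∂_α∂_β u. -/
def Qnl {n : ℕ} (A : ℝ × (Fin (n + 1) → ℝ) → ℝ)
    (B : Fin (n + 1) → Fin (n + 1) → ℝ × (Fin (n + 1) → ℝ) → ℝ)
    (u : ℝ → Eu n → ℝ) : ℝ → Eu n → ℝ :=
  fun t x => A (u t x, fun α => pd α u t x)
    + ∑ α, ∑ β, B α β (u t x, fun γ => pd γ u t x) * pd α (pd β u) t x

/-- The quadratically truncated nonlinearity, evaluated on the pair (v,w);
the iteration RHS is `iterRHS a b A B u_{l-1} u_l`. -/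
def iterRHS (a : Fin 5 → ℝ) (b A : Fin 5 → Fin 5 → ℝ) (B : Fin 5 → Fin 5 → Fin 5 → ℝ)
    (v w : ℝ → Eu 4 → ℝ) : ℝ → Eu 4 → ℝ :=
  fun t x => (∑ α : Fin 5, a α * v t x * pd (n := 4) α v t x)
    + (∑ α : Fin 5, ∑ β : Fin 5, b α β * pd (n := 4) α v t x * pd (n := 4) β v t x)
    + (∑ α : Fin 5, ∑ β : Fin 5, A α β * v t x * pd (n := 4) α (pd (n := 4) β w) t x)
    + (∑ α : Fin 5, ∑ β : Fin 5, ∑ γ : Fin 5,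
        B α β γ * pd (n := 4) α v t x * pd (n := 4) β (pd (n := 4) γ w) t x)

/-! ### Directional derivatives on space-time -/

/-- Directional derivative in the direction `v` of a function on space-time `ℝ × ℝⁿ`. -/
def D {n : ℕ} (v : ℝ × Eu n) (f : ℝ × Eu n → ℝ) : ℝ × Eu n → ℝ :=
  fun p => fderiv ℝ f p v

/-- The unit vector in the time direction. -/
def vt (n : ℕ) : ℝ × Eu n := (1, 0)

/-- The unit vector in the direction of the `i`-th space coordinate. -/
def vx {n : ℕ} (i : Fin n) : ℝ × Eu n := (0, EuclideanSpace.single i 1)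

/-- `g` is the derivative of `f` in the direction `v`, everywhere. Phrased along lines, so that the
one-variable rules for `HasDerivAt` apply. -/
def HD {n : ℕ} (v : ℝ × Eu n) (f g : ℝ × Eu n → ℝ) : Prop :=
  ∀ p, HasDerivAt (fun s : ℝ => f (p + s • v)) (g p) 0

variable {n : ℕ} {v : ℝ × Eu n} {f g f' g' : ℝ × Eu n → ℝ}

lemma HD.mul (hf : HD v f f') (hg : HD v g g') :
    HD v (fun p => f p * g p) (fun p => f' p * g p + f p * g' p) := by
  intro p
  simpa using (hf p).fun_mul (hg p)

lemma HD.add (hf : HD v f f') (hg : HD v g g') :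
    HD v (fun p => f p + g p) (fun p => f' p + g' p) := by
  intro p
  simpa using (hf p).fun_add (hg p)

lemma HD.sub (hf : HD v f f') (hg : HD v g g') :
    HD v (fun p => f p - g p) (fun p => f' p - g' p) := by
  intro p
  simpa using (hf p).fun_sub (hg p)

lemma HD.neg (hf : HD v f f') : HD v (fun p => - f p) (fun p => - f' p) := by
  intro p
  simpa using (hf p).fun_neg

lemma HD.const_mul (c : ℝ) (hf : HD v f f') :
    HD v (fun p => c * f p) (fun p => c * f' p) := by
  intro p
  simpa using (hf p).const_mul c

lemma HD.pow (k : ℕ) (hf : HD v f f') :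
    HD v (fun p => f p ^ k) (fun p => k * f p ^ (k - 1) * f' p) := by
  intro p
  simpa using (hf p).fun_pow k

lemma HD.sum {ι : Type*} (s : Finset ι) {f f' : ι → ℝ × Eu n → ℝ}
    (hf : ∀ i ∈ s, HD v (f i) (f' i)) :
    HD v (fun p => ∑ i ∈ s, f i p) (fun p => ∑ i ∈ s, f' i p) := by
  intro p
  exact HasDerivAt.fun_sum (fun i hi => hf i hi p)

lemma HD.congr (hf : HD v f f') (h : ∀ p, f' p = g' p) : HD v f g' := by
  intro p
  simpa [← h p] using hf p

lemma hasDerivAt_line (p v : ℝ × Eu n) : HasDerivAt (fun s : ℝ => p + s • v) v 0 := by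
  simpa using ((hasDerivAt_id (0 : ℝ)).smul_const v).const_add p

lemma HD.of_differentiable (hf : Differentiable ℝ f) : HD v f (D v f) := by
  intro p
  have h1 : HasFDerivAt f (fderiv ℝ f p) (p + (0 : ℝ) • v) := by
    simpa using (hf p).hasFDerivAt
  exact h1.comp_hasDerivAt (0 : ℝ) (hasDerivAt_line p v)

lemma HD.D_eq (h : HD v f f') (hf : Differentiable ℝ f) (p : ℝ × Eu n) : D v f p = f' p :=
  (HD.of_differentiable hf p).unique (h p)

/-- Smoothness of a function on space-time. -/
abbrev Sm (f : ℝ × Eu n → ℝ) : Prop := ContDiff ℝ (⊤ : ℕ∞) f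

lemma Sm.D (hf : Sm f) (v : ℝ × Eu n) : Sm (D v f) := by
  unfold _root_.D
  exact (hf.fderiv_right (m := (⊤ : ℕ∞)) (by simp)).clm_apply contDiff_const

lemma Sm.diff (hf : Sm f) : Differentiable ℝ f := hf.differentiable (by simp)

lemma Sm.hd (hf : Sm f) (v : ℝ × Eu n) : HD v f (_root_.D v f) := HD.of_differentiable hf.diff

lemma D_comm (hf : Sm f) (v v' : ℝ × Eu n) (p : ℝ × Eu n) :
    D v (D v' f) p = D v' (D v f) p := by
  have hs : IsSymmSndFDerivAt ℝ f p :=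
    hf.contDiffAt.isSymmSndFDerivAt (by
      simp only [minSmoothness_of_isRCLikeNormedField]
      exact WithTop.coe_le_coe.2 (le_top : (2 : ℕ∞) ≤ ⊤))
  have hd : Differentiable ℝ (fderiv ℝ f) :=
    (hf.fderiv_right (m := (⊤ : ℕ∞)) (by simp)).differentiable (by simp)
  have key : ∀ a b : ℝ × Eu n, D a (D b f) p = fderiv ℝ (fderiv ℝ f) p a b := by
    intro a b
    unfold D
    rw [fderiv_clm_apply (hd p) (differentiableAt_const b)]
    simp
  rw [key, key]
  exact hs.eq v _

/-! ### The coordinate functions and the radial weight -/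

/-- The `i`-th space coordinate as a function on space-time. -/
def X (i : Fin n) : ℝ × Eu n → ℝ := fun p => p.2 i

/-- The radial weight `(ρ² + |x|²)^{-1/2}`. -/
def qf (n : ℕ) (ρ : ℝ) : ℝ × Eu n → ℝ := fun p => (√(ρ ^ 2 + ‖p.2‖ ^ 2))⁻¹

/-- The weight `(1 + |x|²)^{1/2}` on space-time. -/
def jf (n : ℕ) : ℝ × Eu n → ℝ := fun p => √(1 + ‖p.2‖ ^ 2)

lemma X_sm (i : Fin n) : Sm (X i) := by
  unfold X Sm
  fun_prop

lemma X_vx (i j : Fin n) : HD (vx j) (X i) (fun _ => if i = j then 1 else 0) := by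
  intro p
  have h : HasDerivAt (fun s : ℝ => p.2 i + s * (if i = j then 1 else 0))
      (if i = j then 1 else 0) 0 := by
    simpa using ((hasDerivAt_id (0 : ℝ)).mul_const (if i = j then (1 : ℝ) else 0)).const_add (p.2 i)
  convert h using 1
  funext s
  simp [X, vx, PiLp.single_apply]

lemma X_vt (i : Fin n) : HD (vt n) (X i) (fun _ => 0) := by
  intro p
  simpa [X, vt] using hasDerivAt_const (0 : ℝ) (p.2 i)

lemma qf_sm {ρ : ℝ} (hρ : 0 < ρ) : Sm (qf n ρ) := by
  unfold qf
  have h0 : ∀ p : ℝ × Eu n, ρ ^ 2 + ‖p.2‖ ^ 2 ≠ 0 := fun p => by positivity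
  refine ContDiff.inv (ContDiff.sqrt ?_ h0) (fun p => by positivity)
  exact contDiff_const.add (contDiff_snd.norm_sq ℝ)

lemma jf_sm : Sm (jf n) := by
  unfold jf
  exact ContDiff.sqrt (contDiff_const.add (contDiff_snd.norm_sq ℝ)) (fun p => by positivity)

lemma norm_sq_vx (i : Fin n) :
    HD (vx i) (fun p => ‖p.2‖ ^ 2) (fun p => 2 * X i p) := by
  have h := HD.sum Finset.univ (fun j (_ : j ∈ Finset.univ) => (X_vx j i).pow 2)
  have e : (fun p : ℝ × Eu n => ‖p.2‖ ^ 2) = fun p => ∑ j, X j p ^ 2 := by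
    funext p
    simp [EuclideanSpace.norm_sq_eq, X]
  rw [e]
  refine h.congr (fun p => ?_)
  simp

lemma qf_pos {ρ : ℝ} (hρ : 0 < ρ) (p : ℝ × Eu n) : 0 < qf n ρ p := by
  unfold qf
  positivity

lemma qf_sq {ρ : ℝ} (hρ : 0 < ρ) (p : ℝ × Eu n) :
    qf n ρ p ^ 2 * (ρ ^ 2 + ∑ i, X i p ^ 2) = 1 := by
  have e : ‖p.2‖ ^ 2 = ∑ j, X j p ^ 2 := by simp [EuclideanSpace.norm_sq_eq, X]
  rw [← e]
  unfold qf
  have h0 : ρ ^ 2 + ‖p.2‖ ^ 2 ≠ 0 := by positivity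
  rw [inv_pow, Real.sq_sqrt (by positivity)]
  field_simp

lemma qf_vx {ρ : ℝ} (hρ : 0 < ρ) (i : Fin n) :
    HD (vx i) (qf n ρ) (fun p => - (X i p * qf n ρ p ^ 3)) := by
  intro p
  have h1 := ((norm_sq_vx i p).const_add (ρ ^ 2)).sqrt (by positivity)
  have h2 := h1.inv (by positivity)
  refine (h2.congr_deriv ?_)
  simp only [zero_smul, add_zero, qf]
  have : 0 < √(ρ ^ 2 + ‖p.2‖ ^ 2) := by positivity
  field_simp

lemma qf_vt (ρ : ℝ) : HD (vt n) (qf n ρ) (fun _ => 0) := by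
  intro p
  simpa [qf, vt] using hasDerivAt_const (0 : ℝ) (qf n ρ p)

lemma jf_vx (i : Fin n) : HD (vx i) (jf n) (fun p => X i p / jf n p) := by
  intro p
  have h1 := ((norm_sq_vx i p).const_add 1).sqrt (by positivity)
  refine (h1.congr_deriv ?_)
  simp only [zero_smul, add_zero, jf]
  have : 0 < √(1 + ‖p.2‖ ^ 2) := by positivity
  field_simp

lemma jf_vt : HD (vt n) (jf n) (fun _ => 0) := by
  intro p
  simpa [jf, vt] using hasDerivAt_const (0 : ℝ) (jf n p)

/-! ### The cutoff -/

/-- A smooth cutoff equal to `1` where `⟨x⟩ + t ≤ R` and vanishing where `⟨x⟩ + t ≥ 2R`. It is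
nonincreasing along outgoing light cones, which makes energy estimates localizable. -/
def cut (n : ℕ) (R : ℝ) : ℝ × Eu n → ℝ :=
  fun p => Real.smoothTransition (2 - (jf n p + p.1) / R)

/-- Minus the time derivative of `cut n R`. -/
def dcut (n : ℕ) (R : ℝ) : ℝ × Eu n → ℝ :=
  fun p => deriv Real.smoothTransition (2 - (jf n p + p.1) / R) / R

lemma cut_sm (R : ℝ) : Sm (cut n R) := by
  unfold cut
  refine Real.smoothTransition.contDiff.comp ?_
  exact contDiff_const.sub ((jf_sm.add contDiff_fst).div_const R)

lemma cut_nonneg (R : ℝ) (p : ℝ × Eu n) : 0 ≤ cut n R p := Real.smoothTransition.nonneg _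

lemma cut_le_one (R : ℝ) (p : ℝ × Eu n) : cut n R p ≤ 1 := Real.smoothTransition.le_one _

lemma cut_eq_one {R : ℝ} (hR : 0 < R) (p : ℝ × Eu n) (h : jf n p + p.1 ≤ R) : cut n R p = 1 := by
  apply Real.smoothTransition.one_of_one_le
  have := (div_le_one hR).2 h
  linarith

lemma norm_le_jf (p : ℝ × Eu n) : ‖p.2‖ ≤ jf n p := Real.le_sqrt_of_sq_le (by linarith)

lemma cut_eq_zero {R : ℝ} (hR : 0 < R) (p : ℝ × Eu n) (ht : 0 ≤ p.1) (h : 2 * R < ‖p.2‖) :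
    cut n R p = 0 := by
  apply Real.smoothTransition.zero_of_nonpos
  have h1 := norm_le_jf p
  have : 2 ≤ (jf n p + p.1) / R := (le_div_iff₀ hR).2 (by linarith)
  linarith

lemma dcut_nonneg {R : ℝ} (hR : 0 < R) (p : ℝ × Eu n) : 0 ≤ dcut n R p :=
  div_nonneg (Real.smoothTransition.monotone.deriv_nonneg) hR.le

lemma st_diff : Differentiable ℝ Real.smoothTransition :=
  (Real.smoothTransition.contDiff (n := 1)).differentiable (by simp)

lemma cut_vt (R : ℝ) : HD (vt n) (cut n R) (fun p => - dcut n R p) := by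
  intro p
  have h2 : HasDerivAt (fun s : ℝ => 2 - (jf n (p + s • vt n) + (p + s • vt n).1) / R)
      (-(1 / R)) 0 := by
    have a : HasDerivAt (fun s : ℝ => (p + s • vt n).1) 1 0 := by
      simpa [vt] using (hasDerivAt_id (0 : ℝ)).const_add p.1
    simpa using (((jf_vt p).add a).div_const R).const_sub 2
  have h3 := (st_diff _).hasDerivAt.comp (0 : ℝ) h2
  refine h3.congr_deriv ?_
  simp only [zero_smul, add_zero, dcut]
  ring

lemma cut_vx (R : ℝ) (i : Fin n) :
    HD (vx i) (cut n R) (fun p => - (dcut n R p * (X i p / jf n p))) := by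
  intro p
  have h2 : HasDerivAt (fun s : ℝ => 2 - (jf n (p + s • vx i) + (p + s • vx i).1) / R)
      (-((X i p / jf n p) / R)) 0 := by
    have a : HasDerivAt (fun s : ℝ => (p + s • vx i).1) 0 0 := by
      simpa [vx] using hasDerivAt_const (0 : ℝ) p.1
    simpa using (((jf_vx i p).add a).div_const R).const_sub 2
  have h3 := (st_diff _).hasDerivAt.comp (0 : ℝ) h2
  refine h3.congr_deriv ?_
  simp only [zero_smul, add_zero, dcut]
  ring

lemma exists_dcut_bound :
    ∃ c : ℝ, 0 < c ∧ ∀ (n : ℕ) (R : ℝ), 0 < R → ∀ p, dcut n R p ≤ c / R := by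
  have hc : Continuous (deriv Real.smoothTransition) :=
    (Real.smoothTransition.contDiff (n := 1)).continuous_deriv le_rfl
  obtain ⟨c, hc'⟩ := (isCompact_Icc (a := (0 : ℝ)) (b := 1)).bddAbove_image hc.continuousOn
  refine ⟨max c 1, by positivity, fun n R hR p => ?_⟩
  unfold dcut
  gcongr
  generalize 2 - (jf n p + p.1) / R = y
  rcases lt_or_ge y 0 with h | h
  · have : deriv Real.smoothTransition y = 0 := by
      have : Real.smoothTransition =ᶠ[nhds y] fun _ => 0 := by
        filter_upwards [Iio_mem_nhds h] with z hz
        exact Real.smoothTransition.zero_of_nonpos (le_of_lt hz)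
      rw [this.deriv_eq]; simp
    rw [this]; positivity
  rcases lt_or_ge 1 y with h1 | h1
  · have : deriv Real.smoothTransition y = 0 := by
      have : Real.smoothTransition =ᶠ[nhds y] fun _ => 1 := by
        filter_upwards [Ioi_mem_nhds h1] with z hz
        exact Real.smoothTransition.one_of_one_le (le_of_lt hz)
      rw [this.deriv_eq]; simp
    rw [this]; positivity
  · exact (hc' ⟨y, ⟨h, h1⟩, rfl⟩).trans (le_max_left _ _)

/-! ### The divergence theorem -/

/-- The closed ball of radius `R` about the origin. -/
abbrev Bl (n : ℕ) (R : ℝ) : Set (Eu n) := Metric.closedBall 0 R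

lemma int_on (hf : Continuous f) (t R : ℝ) : IntegrableOn (fun x => f (t, x)) (Bl n R) := by
  have : Continuous fun x : Eu n => f (t, x) := by fun_prop
  exact this.continuousOn.integrableOn_compact (isCompact_closedBall _ _)

lemma cont_int (hf : Continuous f) (R : ℝ) : Continuous fun t => ∫ x in Bl n R, f (t, x) :=
  continuous_parametric_integral_of_continuous (f := fun t x => f (t, x))
    (by simpa [Function.uncurry_def] using hf) (isCompact_closedBall _ _)

lemma D_slice_vx (hf : Sm f) (t : ℝ) (x : Eu n) (i : Fin n) :
    fderiv ℝ (fun y => f (t, y)) x (EuclideanSpace.single i 1) = D (vx i) f (t, x) := by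
  have h : HasFDerivAt (fun y : Eu n => (t, y)) (ContinuousLinearMap.inr ℝ ℝ (Eu n)) x :=
    hasFDerivAt_prodMk_right t x
  have := ((hf.diff (t, x)).hasFDerivAt.comp x h).fderiv
  have e : (f ∘ fun y : Eu n => (t, y)) = fun y => f (t, y) := rfl
  rw [e] at this
  rw [this]
  simp [D, vx]

/-- The integral of a spatial derivative of a function supported in the ball vanishes. -/
lemma int_dx_zero (hf : Sm f) {t R : ℝ} (hz : ∀ x, R < ‖x‖ → f (t, x) = 0) (i : Fin n) :
    ∫ x in Bl n R, D (vx i) f (t, x) = 0 := by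
  set G : Eu n → ℝ := fun y => f (t, y) with hG
  have hGs : ContDiff ℝ (⊤ : ℕ∞) G := hf.comp (by fun_prop)
  have hDz : ∀ x, R < ‖x‖ → fderiv ℝ G x (EuclideanSpace.single i 1) = 0 := by
    intro x hx
    have : G =ᶠ[nhds x] fun _ => 0 := by
      filter_upwards [(isOpen_lt continuous_const continuous_norm).mem_nhds hx] with y hy
      exact hz y hy
    rw [this.fderiv_eq]
    simp
  have hcs : HasCompactSupport G := by
    refine HasCompactSupport.intro (isCompact_closedBall (0 : Eu n) R) (fun x hx => hz x ?_)
    simpa using hx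
  have hcs' : HasCompactSupport fun x => fderiv ℝ G x (EuclideanSpace.single i 1) := by
    refine HasCompactSupport.intro (isCompact_closedBall (0 : Eu n) R) (fun x hx => hDz x ?_)
    simpa using hx
  have hc' : Continuous fun x => fderiv ℝ G x (EuclideanSpace.single i 1) :=
    (hGs.continuous_fderiv (by simp)).clm_apply continuous_const
  have key := integral_mul_fderiv_eq_neg_fderiv_mul_of_integrable (μ := (volume : Measure (Eu n)))
    (f := fun _ => (1 : ℝ)) (g := G) (v := EuclideanSpace.single i 1) (by simp)
    (by simpa using hc'.integrable_of_hasCompactSupport hcs')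
    (by simpa using hGs.continuous.integrable_of_hasCompactSupport hcs)
    (fun x _ => by simp) (fun x _ => hGs.differentiable (by simp) x)
  simp only [one_mul] at key
  have e : ∀ x, D (vx i) f (t, x) = fderiv ℝ G x (EuclideanSpace.single i 1) :=
    fun x => (D_slice_vx hf t x i).symm
  simp only [e]
  rw [setIntegral_eq_integral_of_forall_compl_eq_zero (fun x hx => hDz x (by simpa using hx)), key]
  simp

lemma hasDerivAt_time (hf : Sm f) (t : ℝ) (x : Eu n) :
    HasDerivAt (fun s => f (s, x)) (D (vt n) f (t, x)) t := by
  have h : HasFDerivAt (fun s : ℝ => (s, x)) (ContinuousLinearMap.inl ℝ ℝ (Eu n)) t :=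
    hasFDerivAt_prodMk_left t x
  have := ((hf.diff (t, x)).hasFDerivAt.comp t h).hasDerivAt
  simpa [D, vt, Function.comp_def] using this

lemma int_dt (hf : Sm f) {s : ℝ} (hs : 0 ≤ s) (R : ℝ) :
    (∫ x in Bl n R, f (s, x)) - (∫ x in Bl n R, f (0, x))
      = ∫ t in (0 : ℝ)..s, ∫ x in Bl n R, D (vt n) f (t, x) := by
  have hc : Continuous (D (vt n) f) := (hf.D _).continuous
  rw [← integral_sub (int_on hf.continuous _ _) (int_on hf.continuous _ _),
    intervalIntegral.integral_of_le hs]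
  rw [integral_integral_swap (f := fun t x => D (vt n) f (t, x))]
  · refine setIntegral_congr_fun measurableSet_closedBall (fun x _ => ?_)
    rw [← intervalIntegral.integral_of_le hs]
    refine (intervalIntegral.integral_eq_sub_of_hasDerivAt
      (fun t _ => hasDerivAt_time hf t x) ?_).symm
    exact (hc.comp (by fun_prop : Continuous fun t : ℝ => (t, x))).intervalIntegrable _ _
  · rw [Measure.prod_restrict]
    have : IntegrableOn (D (vt n) f) (Icc 0 s ×ˢ Bl n R) (volume.prod volume) :=
      hc.continuousOn.integrableOn_compact (isCompact_Icc.prod (isCompact_closedBall _ _))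
    exact this.mono_set (prod_mono Ioc_subset_Icc_self le_rfl)

/-- The divergence theorem on `[0,s] × ℝⁿ` for a space-time vector field `(P, V)` whose spatial part
is supported in the ball of radius `R`. -/
lemma divergence {P : ℝ × Eu n → ℝ} {V : Fin n → ℝ × Eu n → ℝ} (hP : Sm P) (hV : ∀ i, Sm (V i))
    {s R : ℝ} (hs : 0 ≤ s)
    (hz : ∀ i, ∀ t, 0 ≤ t → ∀ x, R < ‖x‖ → V i (t, x) = 0) :
    (∫ x in Bl n R, P (s, x)) - (∫ x in Bl n R, P (0, x))
      = ∫ t in (0 : ℝ)..s, ∫ x in Bl n R,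
          (D (vt n) P (t, x) + ∑ i, D (vx i) (V i) (t, x)) := by
  rw [int_dt hP hs]
  refine intervalIntegral.integral_congr (fun t ht => ?_)
  rw [uIcc_of_le hs] at ht
  rw [integral_add (int_on (hP.D _).continuous _ _)
    (integrable_finsetSum _ fun i _ => int_on ((hV i).D _).continuous _ _),
    integral_finsetSum _ fun i _ => int_on ((hV i).D _).continuous _ _]
  rw [Finset.sum_eq_zero fun i _ => int_dx_zero (hV i) (hz i t ht.1) i, add_zero]

/-- The weighted Cauchy–Schwarz inequality on a ball. -/
lemma cauchy_schwarz {η a b : ℝ × Eu n → ℝ} (hη : Continuous η) (ha : Continuous a)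
    (hb : Continuous b) (h0 : ∀ p, 0 ≤ η p) (t R : ℝ) :
    ∫ x in Bl n R, η (t, x) * (a (t, x) * b (t, x))
      ≤ √(∫ x in Bl n R, η (t, x) * a (t, x) ^ 2) * √(∫ x in Bl n R, η (t, x) * b (t, x) ^ 2) := by
  set A := ∫ x in Bl n R, η (t, x) * a (t, x) ^ 2 with hA
  set B := ∫ x in Bl n R, η (t, x) * b (t, x) ^ 2 with hB
  set C := ∫ x in Bl n R, η (t, x) * (a (t, x) * b (t, x)) with hC
  have hA0 : 0 ≤ A := integral_nonneg fun x => mul_nonneg (h0 _) (sq_nonneg _)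
  have hB0 : 0 ≤ B := integral_nonneg fun x => mul_nonneg (h0 _) (sq_nonneg _)
  have key : ∀ s : ℝ, 0 ≤ A * (s * s) + (-2 * C) * s + B := by
    intro s
    have h : 0 ≤ ∫ x in Bl n R, η (t, x) * (s * a (t, x) - b (t, x)) ^ 2 :=
      integral_nonneg fun x => mul_nonneg (h0 _) (sq_nonneg _)
    have e : ∫ x in Bl n R, η (t, x) * (s * a (t, x) - b (t, x)) ^ 2
        = ∫ x in Bl n R, (s * s * (η (t, x) * a (t, x) ^ 2)
          + (-2 * s) * (η (t, x) * (a (t, x) * b (t, x))) + η (t, x) * b (t, x) ^ 2) := by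
      congr 1
      funext x
      ring
    have i1 := int_on (f := fun p => s * s * (η p * a p ^ 2)) (by fun_prop) t R
    have i2 := int_on (f := fun p => (-2 * s) * (η p * (a p * b p))) (by fun_prop) t R
    have i3 := int_on (f := fun p => η p * b p ^ 2) (by fun_prop) t R
    have e2 := integral_add (i1.add i2) i3
    have e3 := integral_add i1 i2
    simp only [Pi.add_apply] at e2
    rw [e, e2, e3, integral_const_mul, integral_const_mul] at h
    linarith
  have hd := discrim_le_zero key
  unfold discrim at hd
  rw [← Real.sqrt_mul hA0]
  apply Real.le_sqrt_of_sq_le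
  nlinarith

lemma int_mono (hf : Continuous f) (hg : Continuous g) {t R : ℝ}
    (h : ∀ x, f (t, x) ≤ g (t, x)) :
    ∫ x in Bl n R, f (t, x) ≤ ∫ x in Bl n R, g (t, x) :=
  setIntegral_mono (int_on hf t R) (int_on hg t R) h

lemma int_mono_set (hf : Continuous f) (h0 : ∀ p, 0 ≤ f p) {t R R' : ℝ} (h : R ≤ R') :
    ∫ x in Bl n R, f (t, x) ≤ ∫ x in Bl n R', f (t, x) :=
  setIntegral_mono_set (int_on hf t R') (ae_of_all _ fun _ => h0 _)
    (Metric.closedBall_subset_closedBall h).eventuallyLE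

/-! ### The energy estimate on backward light cones -/

/-- The d'Alembertian of a function on space-time. -/
def box (u : ℝ × Eu n → ℝ) : ℝ × Eu n → ℝ :=
  fun p => D (vt n) (D (vt n) u) p - ∑ i, D (vx i) (D (vx i) u) p

/-- The squared length of the spatial gradient. -/
def gs (u : ℝ × Eu n → ℝ) : ℝ × Eu n → ℝ := fun p => ∑ i, D (vx i) u p ^ 2

/-- The squared length of the space-time gradient (twice the energy density). -/
def en (u : ℝ × Eu n → ℝ) : ℝ × Eu n → ℝ := fun p => D (vt n) u p ^ 2 + gs u p

lemma gs_sm {u : ℝ × Eu n → ℝ} (hu : Sm u) : Sm (gs u) :=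
  ContDiff.sum fun _ _ => (hu.D _).pow 2

lemma en_sm {u : ℝ × Eu n → ℝ} (hu : Sm u) : Sm (en u) := ((hu.D _).pow 2).add (gs_sm hu)

lemma box_sm {u : ℝ × Eu n → ℝ} (hu : Sm u) : Sm (box u) :=
  ((hu.D _).D _).sub (ContDiff.sum fun _ _ => (hu.D _).D _)

lemma gs_nonneg (u : ℝ × Eu n → ℝ) (p : ℝ × Eu n) : 0 ≤ gs u p :=
  Finset.sum_nonneg fun _ _ => sq_nonneg _

lemma en_nonneg (u : ℝ × Eu n → ℝ) (p : ℝ × Eu n) : 0 ≤ en u p :=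
  add_nonneg (sq_nonneg _) (gs_nonneg u p)

lemma gs_hd {u : ℝ × Eu n → ℝ} (hu : Sm u) (v : ℝ × Eu n) :
    HD v (gs u) (fun p => ∑ i, 2 * (D (vx i) u p * D (vx i) (D v u) p)) := by
  refine (HD.sum Finset.univ fun i _ => ((hu.D (vx i)).hd v).pow 2).congr fun p => ?_
  refine Finset.sum_congr rfl fun i _ => ?_
  rw [D_comm hu v (vx i)]
  simp
  ring

/-- The gradient of `⟨x⟩` has length at most `1`. -/
lemma radial_cs (p : ℝ × Eu n) (y : Fin n → ℝ) :
    (∑ i, X i p / jf n p * y i) ^ 2 ≤ ∑ i, y i ^ 2 := by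
  refine (Finset.sum_mul_sq_le_sq_mul_sq _ _ _).trans ?_
  refine mul_le_of_le_one_left (Finset.sum_nonneg fun _ _ => sq_nonneg _) ?_
  have e : ‖p.2‖ ^ 2 = ∑ j, X j p ^ 2 := by simp [EuclideanSpace.norm_sq_eq, X]
  simp only [div_pow]
  rw [← Finset.sum_div, ← e, jf, Real.sq_sqrt (by positivity)]
  exact (div_le_one (by positivity)).2 (by linarith)

/-- The energy current multiplied by the cutoff has divergence at most `η ∂ₜu □u`: the terms in which
a derivative falls on the cutoff have a favourable sign. -/
lemma energy_div {u : ℝ × Eu n → ℝ} (hu : Sm u) {R : ℝ} (hR : 0 < R) (p : ℝ × Eu n) :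
    D (vt n) (fun p => cut n R p * (1 / 2 * en u p)) p
      + ∑ i, D (vx i) (fun p => - (cut n R p * (D (vt n) u p * D (vx i) u p))) p
      ≤ cut n R p * (D (vt n) u p * box u p) := by
  have hη := cut_sm (n := n) R
  have h1 := ((cut_vt R).mul
    ((((hu.D (vt n)).hd (vt n)).pow 2).add (gs_hd hu (vt n)) |>.const_mul (1 / 2))).D_eq
    (Sm.diff (hη.mul (contDiff_const.mul (en_sm hu)))) p
  have h2 : ∀ i, _ := fun i => ((cut_vx R i).mul
    (((hu.D (vt n)).hd (vx i)).mul ((hu.D (vx i)).hd (vx i)))).neg.D_eq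
    (Sm.diff (hη.mul ((hu.D _).mul (hu.D _))).neg) p
  have h1' : D (vt n) (fun p => cut n R p * (1 / 2 * en u p)) p = _ := h1
  rw [h1']
  simp only [h2]
  have hcs := radial_cs p fun i => D (vx i) u p
  have hd := dcut_nonneg hR p
  have e1 : ∑ i, -(-(dcut n R p * (X i p / jf n p)) * (D (vt n) u p * D (vx i) u p) +
      cut n R p * (D (vx i) (D (vt n) u) p * D (vx i) u p
        + D (vt n) u p * D (vx i) (D (vx i) u) p))
      = dcut n R p * D (vt n) u p * ∑ i, X i p / jf n p * D (vx i) u p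
        - cut n R p * ∑ i, D (vx i) u p * D (vx i) (D (vt n) u) p
        - cut n R p * D (vt n) u p * ∑ i, D (vx i) (D (vx i) u) p := by
    simp only [Finset.mul_sum, ← Finset.sum_sub_distrib]
    refine Finset.sum_congr rfl fun i _ => ?_
    ring
  have e1' : ∀ i, D (vx i) (D (vt n) u) p = D (vt n) (D (vx i) u) p :=
    fun i => D_comm hu (vx i) (vt n) p
  simp only [e1'] at e1 ⊢
  rw [e1, ← Finset.mul_sum]
  simp only [box, gs] at *
  set Y := ∑ i, X i p / jf n p * D (vx i) u p
  set G := ∑ i, D (vx i) u p ^ 2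
  have : D (vt n) u p * Y ≤ 1 / 2 * (D (vt n) u p ^ 2 + G) := by
    nlinarith [sq_nonneg (D (vt n) u p - Y)]
  have := mul_le_mul_of_nonneg_left this hd
  norm_num
  linarith

/-- The energy estimate, on balls, with the source measured through the cutoff. The inequality for
the energy is used at the time at which the cut-off energy is largest. -/
lemma energy_bound {u : ℝ × Eu n → ℝ} (hu : Sm u) {T a N : ℝ} (hT : 0 ≤ T) (ha : 0 ≤ a)
    (hN0 : 0 ≤ N)
    (h0 : ∀ R, ∫ x in Bl n R, en u (0, x) ≤ a ^ 2)
    (hN : ∀ R, 0 < R →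
      ∫ t in (0 : ℝ)..T, √(∫ x in Bl n (2 * R), cut n R (t, x) * box u (t, x) ^ 2) ≤ N)
    {t : ℝ} (ht : t ∈ Icc 0 T) (R' : ℝ) : ∫ x in Bl n R', en u (t, x) ≤ (a + 2 * N) ^ 2 := by
  have hu1 := (hu.D (vt n)).continuous
  have hen := (en_sm hu).continuous
  have hb := (box_sm hu).continuous
  -- the cutoff is `1` on the ball of radius `R'` up to time `T`
  set R : ℝ := √(1 + R' ^ 2) + T + 1 with hRdef
  have hR : 0 < R := by positivity
  have hη := (cut_sm (n := n) R).continuous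
  set E : ℝ → ℝ := fun s => ∫ x in Bl n (2 * R), cut n R (s, x) * (1 / 2 * en u (s, x)) with hE
  set N' : ℝ → ℝ := fun s => √(∫ x in Bl n (2 * R), cut n R (s, x) * box u (s, x) ^ 2) with hN'
  have hN'c : Continuous N' := (cont_int (f := fun p => cut n R p * box u p ^ 2)
    (by fun_prop) _).sqrt
  have hEc : Continuous E := cont_int (f := fun p => cut n R p * (1 / 2 * en u p)) (by fun_prop) _
  have hE0 : ∀ s, 0 ≤ E s := fun s => integral_nonneg fun x =>
    mul_nonneg (cut_nonneg _ _) (mul_nonneg (by norm_num) (en_nonneg _ _))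
  obtain ⟨s, hs, hmax⟩ := isCompact_Icc.exists_isMaxOn (nonempty_Icc.2 hT) hEc.continuousOn
  have hdiv := divergence (P := fun p => cut n R p * (1 / 2 * en u p))
    (V := fun i p => - (cut n R p * (D (vt n) u p * D (vx i) u p)))
    ((cut_sm R).mul (contDiff_const.mul (en_sm hu)))
    (fun i => ((cut_sm R).mul ((hu.D _).mul (hu.D _))).neg) (s := s) (R := 2 * R) hs.1
    (fun i t ht x hx => by
      have h := cut_eq_zero hR (t, x) ht hx
      simp only [h]; simp)
  have hEs0 : E 0 ≤ 1 / 2 * a ^ 2 := by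
    have h1 : E 0 ≤ ∫ x in Bl n (2 * R), 1 / 2 * en u (0, x) :=
      int_mono (f := fun p => cut n R p * (1 / 2 * en u p)) (g := fun p => 1 / 2 * en u p)
        (by fun_prop) (by fun_prop) fun x => mul_le_of_le_one_left
          (mul_nonneg (by norm_num) (en_nonneg _ _)) (cut_le_one _ _)
    rw [integral_const_mul] at h1
    linarith [h0 (2 * R)]
  have hcd : Continuous fun p => D (vt n) (fun p => cut n R p * (1 / 2 * en u p)) p
      + ∑ i, D (vx i) (fun p => - (cut n R p * (D (vt n) u p * D (vx i) u p))) p := by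
    refine (Sm.D ((cut_sm R).mul (contDiff_const.mul (en_sm hu))) _).continuous.add
      (continuous_finsetSum _ fun i _ => ?_)
    exact (Sm.D ((cut_sm R).mul ((hu.D _).mul (hu.D _))).neg _).continuous
  have hstep : E s - E 0 ≤ ∫ τ in (0 : ℝ)..s, √(2 * E s) * N' τ := by
    have : E s - E 0 = _ := hdiv
    rw [this]
    refine intervalIntegral.integral_mono_on hs.1 ?_ ?_ ?_
    · exact (cont_int hcd _).intervalIntegrable _ _
    · exact (hN'c.const_mul _).intervalIntegrable _ _
    · intro τ hτ
      refine (int_mono hcd (g := fun p => cut n R p * (D (vt n) u p * box u p)) (by fun_prop)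
        fun x => energy_div hu hR _).trans ?_
      refine (cauchy_schwarz hη hu1 hb (cut_nonneg R) τ (2 * R)).trans ?_
      refine mul_le_mul_of_nonneg_right (Real.sqrt_le_sqrt ?_) (Real.sqrt_nonneg _)
      have h1 : E τ ≤ E s := hmax ⟨hτ.1, hτ.2.trans hs.2⟩
      have h2 : ∫ x in Bl n (2 * R), cut n R (τ, x) * D (vt n) u (τ, x) ^ 2 ≤ 2 * E τ := by
        rw [hE, ← integral_const_mul]
        refine int_mono (f := fun p => cut n R p * D (vt n) u p ^ 2)
          (g := fun p => 2 * (cut n R p * (1 / 2 * en u p))) (by fun_prop) (by fun_prop)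
          fun x => ?_
        have := mul_le_mul_of_nonneg_left
          (show D (vt n) u (τ, x) ^ 2 ≤ en u (τ, x) from by
            have := gs_nonneg u (τ, x); simp only [en]; linarith) (cut_nonneg R (τ, x))
        linarith
      linarith
  have hintg : ∫ τ in (0 : ℝ)..s, √(2 * E s) * N' τ ≤ √(2 * E s) * N := by
    rw [intervalIntegral.integral_const_mul]
    refine mul_le_mul_of_nonneg_left ?_ (Real.sqrt_nonneg _)
    refine le_trans ?_ (hN R hR)
    refine intervalIntegral.integral_mono_interval le_rfl hs.1 hs.2 ?_
      (hN'c.intervalIntegrable _ _)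
    exact ae_of_all _ fun x => Real.sqrt_nonneg _
  -- `m² ≤ a² + 2 N m` forces `m ≤ a + 2 N`
  have hm : √(2 * E s) ≤ a + 2 * N := by
    have hsq := Real.sq_sqrt (mul_nonneg zero_le_two (hE0 s))
    have hm0 := Real.sqrt_nonneg (2 * E s)
    set m := √(2 * E s)
    by_contra! hcon
    nlinarith
  have hEs : 2 * E s ≤ (a + 2 * N) ^ 2 := by
    have hsq := Real.sq_sqrt (mul_nonneg zero_le_two (hE0 s))
    rw [← hsq]
    gcongr
  have hEt : E t ≤ E s := hmax ht
  have hR' : R' ≤ 2 * R := by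
    have : R' ≤ √(1 + R' ^ 2) := Real.le_sqrt_of_sq_le (by linarith)
    linarith
  refine le_trans ?_ (show 2 * E t ≤ _ by linarith)
  rw [hE, ← integral_const_mul]
  refine le_trans ?_ (int_mono_set (f := fun p => 2 * (cut n R p * (1 / 2 * en u p))) (by fun_prop)
    (fun p => by have := mul_nonneg (cut_nonneg R p) (en_nonneg u p); linarith) hR')
  refine setIntegral_mono_on (int_on hen _ _)
    (int_on (f := fun p => 2 * (cut n R p * (1 / 2 * en u p))) (by fun_prop) _ _)
    measurableSet_closedBall fun x hx => ?_
  have h1 : cut n R (t, x) = 1 := by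
    apply cut_eq_one hR
    have hx' : ‖x‖ ≤ R' := by simpa using hx
    have : jf n (t, x) ≤ √(1 + R' ^ 2) := by
      unfold jf
      gcongr
    have := ht.2
    simp only
    linarith
  simp only [h1]
  linarith

/-! ### A Hardy inequality -/

lemma qX_sq {ρ : ℝ} (hρ : 0 < ρ) (p : ℝ × Eu n) :
    qf n ρ p ^ 2 * ∑ i, X i p ^ 2 = 1 - ρ ^ 2 * qf n ρ p ^ 2 := by
  have := qf_sq hρ p
  linarith

/-- Hardy's inequality at a fixed time, from the divergence of `x q² u²` with
`q = (ρ² + |x|²)^{-1/2}`. -/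
lemma hardy (hn : 3 ≤ n) {u : ℝ × Eu n → ℝ} (hu : Sm u) {ρ : ℝ} (hρ : 0 < ρ) {t R : ℝ}
    (hz : ∀ x, R < ‖x‖ → u (t, x) = 0) :
    ∫ x in Bl n R, qf n ρ (t, x) ^ 2 * u (t, x) ^ 2 ≤ 4 * ∫ x in Bl n R, gs u (t, x) := by
  have hq := qf_sm (n := n) hρ
  have hV : ∀ j : Fin n, Sm fun p => X j p * (qf n ρ p ^ 2 * u p ^ 2) :=
    fun j => (X_sm j).mul ((hq.pow 2).mul (hu.pow 2))
  have hsum : ∫ x in Bl n R, ∑ j, D (vx j) (fun p => X j p * (qf n ρ p ^ 2 * u p ^ 2)) (t, x)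
      = 0 := by
    rw [integral_finsetSum _ fun j _ => int_on ((hV j).D _).continuous _ _]
    refine Finset.sum_eq_zero fun j _ => int_dx_zero (hV j) (fun x hx => ?_) j
    simp [hz x hx]
  have hpt : ∀ p : ℝ × Eu n, 1 / 2 * (qf n ρ p ^ 2 * u p ^ 2) + (-2) * gs u p
      ≤ ∑ j, D (vx j) (fun p => X j p * (qf n ρ p ^ 2 * u p ^ 2)) p := by
    intro p
    have h2 : ∀ j, _ := fun j => ((X_vx j j).mul
      (((qf_vx hρ j).pow 2).mul ((hu.hd (vx j)).pow 2))).D_eq (hV j).diff p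
    rw [Finset.sum_congr rfl fun j _ => h2 j]
    have e : ∑ j : Fin n, ((if j = j then 1 else 0) * (qf n ρ p ^ 2 * u p ^ 2) +
        X j p * ((2 : ℕ) * qf n ρ p ^ (2 - 1) * -(X j p * qf n ρ p ^ 3) * u p ^ 2
          + qf n ρ p ^ 2 * ((2 : ℕ) * u p ^ (2 - 1) * D (vx j) u p)))
        = n * (qf n ρ p ^ 2 * u p ^ 2)
          - 2 * (qf n ρ p ^ 2 * ∑ j, X j p ^ 2) * (qf n ρ p ^ 2 * u p ^ 2)
          + 2 * (qf n ρ p ^ 2 * u p) * ∑ j, X j p * D (vx j) u p := by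
      have : (n : ℝ) * (qf n ρ p ^ 2 * u p ^ 2) = ∑ _j : Fin n, qf n ρ p ^ 2 * u p ^ 2 := by simp
      rw [this]
      simp only [Finset.mul_sum, Finset.sum_mul, ← Finset.sum_sub_distrib, ← Finset.sum_add_distrib]
      refine Finset.sum_congr rfl fun i _ => ?_
      simp
      ring
    rw [e]
    have hY : (∑ j, X j p * D (vx j) u p) ^ 2 ≤ (∑ j, X j p ^ 2) * gs u p :=
      Finset.sum_mul_sq_le_sq_mul_sq _ _ _
    have hX := qX_sq hρ p
    have hS := gs_nonneg u p
    have hn' : (3 : ℝ) ≤ n := by exact_mod_cast hn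
    have hqY : qf n ρ p ^ 2 * (∑ j, X j p * D (vx j) u p) ^ 2 ≤ gs u p := by
      have h1 := mul_le_mul_of_nonneg_left hY (sq_nonneg (qf n ρ p))
      rw [← mul_assoc, hX] at h1
      have h2 : 0 ≤ ρ ^ 2 * qf n ρ p ^ 2 * gs u p := by positivity
      linarith
    have hk : qf n ρ p ^ 2 * ∑ j, X j p ^ 2 ≤ 1 := by
      rw [hX]
      have : 0 ≤ ρ ^ 2 * qf n ρ p ^ 2 := by positivity
      linarith
    set Y := ∑ j, X j p * D (vx j) u p
    set q := qf n ρ p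
    set A := q ^ 2 * u p ^ 2 with hA
    have hA0 : 0 ≤ A := by positivity
    have i1 : (q ^ 2 * ∑ j, X j p ^ 2) * A ≤ 1 * A := mul_le_mul_of_nonneg_right hk hA0
    have i2 : 3 * A ≤ n * A := mul_le_mul_of_nonneg_right hn' hA0
    have i3 : 0 ≤ 1 / 2 * (q * u p + 2 * (q * Y)) ^ 2 := by positivity
    have i4 : 1 / 2 * (q * u p + 2 * (q * Y)) ^ 2
        = 1 / 2 * A + 2 * (q ^ 2 * u p) * Y + 2 * (q ^ 2 * Y ^ 2) := by rw [hA]; ring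
    linarith
  have huc := hu.continuous
  have hqc := hq.continuous
  have hgc := (gs_sm hu).continuous
  have h := int_mono (f := fun p => 1 / 2 * (qf n ρ p ^ 2 * u p ^ 2) + (-2) * gs u p)
    (g := fun p => ∑ j, D (vx j) (fun p => X j p * (qf n ρ p ^ 2 * u p ^ 2)) p) (by fun_prop)
    (continuous_finsetSum _ fun j _ => ((hV j).D _).continuous) (t := t) (R := R) fun x => hpt _
  rw [hsum, integral_add
    (int_on (f := fun p => 1 / 2 * (qf n ρ p ^ 2 * u p ^ 2)) (by fun_prop) _ _)
    (int_on (f := fun p => (-2) * gs u p) (by fun_prop) _ _), integral_const_mul,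
    integral_const_mul] at h
  linarith

/-! ### The Morawetz multiplier -/

/-- The divergence identity behind the multiplier `M = a · ∇w + b w`, at a point: the letters stand
for the values of the functions and of their derivatives, `aij i j` for `∂ⱼaᵢ`. -/
lemma morawetz_alg (w wt wtt b : ℝ) (wi wti a bi bii : Fin n → ℝ) (wij aij : Fin n → Fin n → ℝ)
    (hsym : ∀ i j, wij i j = wij j i) :
    (wtt * (∑ i, a i * wi i + b * w) + wt * (∑ i, a i * wti i + b * wt))
      + ∑ j, (-(wij j j * (∑ i, a i * wi i + b * w)
          + wi j * (∑ i, (aij i j * wi i + a i * wij j i) + (bi j * w + b * wi j)))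
        + (1 / 2 * (aij j j * (∑ i, wi i ^ 2 - wt ^ 2)
          + a j * (∑ i, 2 * (wi i * wij j i) - 2 * wt * wti j))
        + 1 / 2 * (bii j * w ^ 2 + bi j * (2 * w * wi j))))
      = (wtt - ∑ i, wij i i) * (∑ i, a i * wi i + b * w)
        - (∑ j, ∑ i, aij i j * wi i * wi j
          + (1 / 2 * ∑ j, aij j j - b) * (wt ^ 2 - ∑ i, wi i ^ 2)
          - 1 / 2 * (∑ j, bii j) * w ^ 2) := by
  have key : ∑ j, wi j * ∑ i, a i * wij j i = ∑ j, a j * ∑ i, wi i * wij j i := by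
    simp only [Finset.mul_sum]
    rw [Finset.sum_comm]
    refine Finset.sum_congr rfl fun i _ => Finset.sum_congr rfl fun j _ => ?_
    rw [hsym j i]
    ring
  have e1 : ∀ j, (-(wij j j * (∑ i, a i * wi i + b * w)
          + wi j * (∑ i, (aij i j * wi i + a i * wij j i) + (bi j * w + b * wi j)))
        + (1 / 2 * (aij j j * (∑ i, wi i ^ 2 - wt ^ 2)
          + a j * (∑ i, 2 * (wi i * wij j i) - 2 * wt * wti j))
        + 1 / 2 * (bii j * w ^ 2 + bi j * (2 * w * wi j))))
      = -(wij j j) * (∑ i, a i * wi i + b * w) - ∑ i, aij i j * wi i * wi j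
        - wi j * ∑ i, a i * wij j i - b * wi j ^ 2 + aij j j * (1 / 2 * (∑ i, wi i ^ 2 - wt ^ 2))
        + a j * ∑ i, wi i * wij j i - wt * (a j * wti j) + bii j * (1 / 2 * w ^ 2) := by
    intro j
    have : ∑ i, aij i j * wi i * wi j = wi j * ∑ i, aij i j * wi i := by
      rw [Finset.mul_sum]
      exact Finset.sum_congr rfl fun i _ => by ring
    rw [this, Finset.sum_add_distrib, ← Finset.mul_sum]
    ring
  rw [Finset.sum_congr rfl fun j _ => e1 j]
  simp only [Finset.sum_add_distrib, Finset.sum_sub_distrib, key, ← Finset.sum_mul,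
    ← Finset.mul_sum, Finset.sum_neg_distrib]
  ring

/-- The zeroth order coefficient of the multiplier: half the Laplacian of `(ρ² + |x|²)^{1/2}`, minus
a small correction that produces control of the time derivative. -/
def mb (n : ℕ) (ρ : ℝ) : ℝ × Eu n → ℝ := fun p =>
  1 / 2 * ((n - 1) * qf n ρ p + ρ ^ 2 * qf n ρ p ^ 3) - 1 / (2 * n) * (ρ ^ 4 * qf n ρ p ^ 5)

/-- The radial factor in the gradient of `mb`, see `mb_vx`. -/
def mβ (n : ℕ) (ρ : ℝ) : ℝ × Eu n → ℝ := fun p =>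
  1 / 2 * ((n - 1) + 3 * (ρ ^ 2 * qf n ρ p ^ 2)) - 5 / (2 * n) * (ρ ^ 4 * qf n ρ p ^ 4)

/-- The partial derivative `∂ⱼ` of `mb`. -/
def mb1 (n : ℕ) (ρ : ℝ) (j : Fin n) : ℝ × Eu n → ℝ := fun p =>
  - (X j p * (qf n ρ p ^ 3 * mβ n ρ p))

/-- The second partial derivative `∂ⱼ²` of `mb`. -/
def mb2 (n : ℕ) (ρ : ℝ) (j : Fin n) : ℝ × Eu n → ℝ := fun p =>
  - (qf n ρ p ^ 3 * mβ n ρ p - 3 * X j p ^ 2 * qf n ρ p ^ 5 * mβ n ρ p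
    + X j p ^ 2 * qf n ρ p ^ 3 *
      (-3 * ρ ^ 2 * qf n ρ p ^ 4 + 10 / n * (ρ ^ 4 * qf n ρ p ^ 6)))

lemma mb_sm {ρ : ℝ} (hρ : 0 < ρ) : Sm (mb n ρ) := by
  have hq := qf_sm (n := n) hρ
  unfold mb
  unfold Sm at *
  fun_prop

lemma mβ_sm {ρ : ℝ} (hρ : 0 < ρ) : Sm (mβ n ρ) := by
  have hq := qf_sm (n := n) hρ
  unfold mβ
  unfold Sm at *
  fun_prop

lemma mb1_sm {ρ : ℝ} (hρ : 0 < ρ) (j : Fin n) : Sm (mb1 n ρ j) :=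
  ((X_sm j).mul (((qf_sm hρ).pow 3).mul (mβ_sm hρ))).neg

lemma HD.const (c : ℝ) : HD v (fun _ => c) (fun _ => 0) := fun _ => hasDerivAt_const _ _

lemma mb_vx {ρ : ℝ} (hρ : 0 < ρ) (j : Fin n) : HD (vx j) (mb n ρ) (mb1 n ρ j) := by
  have hq := qf_vx (n := n) hρ j
  refine HD.congr ((((hq.const_mul (n - 1 : ℝ)).add ((hq.pow 3).const_mul (ρ ^ 2))).const_mul
    (1 / 2)).sub (((hq.pow 5).const_mul (ρ ^ 4)).const_mul (1 / (2 * n)))) fun p => ?_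
  simp only [mb1, mβ]
  push_cast
  ring

lemma mb_vt {ρ : ℝ} : HD (vt n) (mb n ρ) (fun _ => 0) := by
  have hq := qf_vt (n := n) ρ
  refine HD.congr ((((hq.const_mul (n - 1 : ℝ)).add ((hq.pow 3).const_mul (ρ ^ 2))).const_mul
    (1 / 2)).sub (((hq.pow 5).const_mul (ρ ^ 4)).const_mul (1 / (2 * n)))) fun p => ?_
  simp

lemma mβ_vx {ρ : ℝ} (hρ : 0 < ρ) (j : Fin n) : HD (vx j) (mβ n ρ) (fun p =>
    X j p * (-3 * ρ ^ 2 * qf n ρ p ^ 4 + 10 / n * (ρ ^ 4 * qf n ρ p ^ 6))) := by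
  have hq := qf_vx (n := n) hρ j
  refine HD.congr ((((HD.const (n - 1 : ℝ)).add
    (((hq.pow 2).const_mul (ρ ^ 2)).const_mul 3)).const_mul
    (1 / 2)).sub (((hq.pow 4).const_mul (ρ ^ 4)).const_mul (5 / (2 * n)))) fun p => ?_
  push_cast
  ring

lemma mb1_vx {ρ : ℝ} (hρ : 0 < ρ) (j : Fin n) : HD (vx j) (mb1 n ρ j) (mb2 n ρ j) := by
  have hq := qf_vx (n := n) hρ j
  refine HD.congr (((X_vx j j).mul ((hq.pow 3).mul (mβ_vx hρ j))).neg) fun p => ?_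
  simp only [mb2]
  push_cast
  simp
  ring

/-- The coefficients `aᵢ = xᵢ (ρ² + |x|²)^{-1/2}` of the multiplier. -/
def ma (n : ℕ) (ρ : ℝ) (i : Fin n) : ℝ × Eu n → ℝ := fun p => X i p * qf n ρ p

lemma ma_sm {ρ : ℝ} (hρ : 0 < ρ) (i : Fin n) : Sm (ma n ρ i) := (X_sm i).mul (qf_sm hρ)

lemma ma_vx {ρ : ℝ} (hρ : 0 < ρ) (i j : Fin n) : HD (vx j) (ma n ρ i) (fun p =>
    (if i = j then 1 else 0) * qf n ρ p + X i p * -(X j p * qf n ρ p ^ 3)) :=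
  (X_vx i j).mul (qf_vx hρ j)

lemma ma_vt {ρ : ℝ} (i : Fin n) : HD (vt n) (ma n ρ i) (fun _ => 0) :=
  ((X_vt i).mul (qf_vt ρ)).congr fun p => by simp

/-- The Morawetz multiplier `M = a · ∇u + b u`. -/
def mM (ρ : ℝ) (u : ℝ × Eu n → ℝ) : ℝ × Eu n → ℝ := fun p =>
  ∑ i, ma n ρ i p * D (vx i) u p + mb n ρ p * u p

/-- The spatial part of the Morawetz current. -/
def mV (ρ : ℝ) (u : ℝ × Eu n → ℝ) (j : Fin n) : ℝ × Eu n → ℝ := fun p =>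
  -(D (vx j) u p * mM ρ u p) + (1 / 2 * (ma n ρ j p * (gs u p - D (vt n) u p ^ 2))
    + 1 / 2 * (mb1 n ρ j p * u p ^ 2))

lemma mM_sm {ρ : ℝ} (hρ : 0 < ρ) {u : ℝ × Eu n → ℝ} (hu : Sm u) : Sm (mM ρ u) :=
  (ContDiff.sum fun i _ => (ma_sm hρ i).mul (hu.D _)).add ((mb_sm hρ).mul hu)

lemma mV_sm {ρ : ℝ} (hρ : 0 < ρ) {u : ℝ × Eu n → ℝ} (hu : Sm u) (j : Fin n) : Sm (mV ρ u j) :=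
  ((hu.D _).mul (mM_sm hρ hu)).neg.add ((contDiff_const.mul ((ma_sm hρ j).mul
    ((gs_sm hu).sub ((hu.D _).pow 2)))).add (contDiff_const.mul ((mb1_sm hρ j).mul (hu.pow 2))))

/-- The bulk term of the Morawetz identity. -/
def mK (ρ : ℝ) (u : ℝ × Eu n → ℝ) : ℝ × Eu n → ℝ := fun p =>
  ∑ j, ∑ i, ((if i = j then 1 else 0) * qf n ρ p + X i p * -(X j p * qf n ρ p ^ 3))
      * D (vx i) u p * D (vx j) u p
    + (1 / 2 * ∑ j : Fin n, ((if j = j then 1 else 0) * qf n ρ p + X j p * -(X j p * qf n ρ p ^ 3))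
        - mb n ρ p) * (D (vt n) u p ^ 2 - gs u p)
    - 1 / 2 * (∑ j, mb2 n ρ j p) * u p ^ 2

lemma morawetz_identity {ρ : ℝ} (hρ : 0 < ρ) {u : ℝ × Eu n → ℝ} (hu : Sm u) (p : ℝ × Eu n) :
    D (vt n) (fun p => D (vt n) u p * mM ρ u p) p + ∑ j, D (vx j) (mV ρ u j) p
      = box u p * mM ρ u p - mK ρ u p := by
  have hMt : HD (vt n) (mM ρ u) (fun p => ∑ i, ma n ρ i p * D (vx i) (D (vt n) u) p
      + mb n ρ p * D (vt n) u p) := by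
    refine HD.congr ((HD.sum Finset.univ fun i _ => (ma_vt i).mul ((hu.D (vx i)).hd (vt n))).add
      (mb_vt.mul (hu.hd (vt n)))) fun p => ?_
    simp only [D_comm hu (vt n) (vx _)]
    simp
  have hMx : ∀ j, HD (vx j) (mM ρ u) _ := fun j =>
    (HD.sum Finset.univ fun i _ => (ma_vx hρ i j).mul ((hu.D (vx i)).hd (vx j))).add
      ((mb_vx hρ j).mul (hu.hd (vx j)))
  have hg : ∀ j, HD (vx j) (gs u)
      (fun p => ∑ i, 2 * (D (vx i) u p * D (vx j) (D (vx i) u) p)) := fun j =>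
    (gs_hd hu (vx j)).congr fun p => Finset.sum_congr rfl fun i _ => by rw [D_comm hu (vx i)]
  have h1 := (((hu.D (vt n)).hd (vt n)).mul hMt).D_eq (Sm.diff ((hu.D _).mul (mM_sm hρ hu))) p
  have h2 : ∀ j, D (vx j) (mV ρ u j) p = _ := fun j => HD.D_eq
    ((((hu.D (vx j)).hd (vx j)).mul (hMx j)).neg.add
    ((((ma_vx hρ j j).mul ((hg j).sub (((hu.D (vt n)).hd (vx j)).pow 2))).const_mul
      (1 / 2)).add (((mb1_vx hρ j).mul ((hu.hd (vx j)).pow 2)).const_mul (1 / 2))))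
    (mV_sm hρ hu j).diff p
  rw [h1, Finset.sum_congr rfl fun j _ => h2 j]
  have key := morawetz_alg (u p) (D (vt n) u p) (D (vt n) (D (vt n) u) p) (mb n ρ p)
    (fun i => D (vx i) u p) (fun i => D (vx i) (D (vt n) u) p) (fun i => ma n ρ i p)
    (fun i => mb1 n ρ i p) (fun i => mb2 n ρ i p) (fun i j => D (vx i) (D (vx j) u) p)
    (fun i j => (if i = j then 1 else 0) * qf n ρ p + X i p * -(X j p * qf n ρ p ^ 3))
    (fun i j => D_comm hu _ _ _)
  refine Eq.trans ?_ key
  congr 1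
  refine Finset.sum_congr rfl fun j _ => ?_
  simp only [mM, gs, Nat.cast_ofNat, Nat.add_one_sub_one, pow_one]

/-! ### Bounds for the Morawetz current -/

lemma k_le_one {ρ : ℝ} (hρ : 0 < ρ) (p : ℝ × Eu n) : ρ ^ 2 * qf n ρ p ^ 2 ≤ 1 := by
  have h := qX_sq hρ p
  have : 0 ≤ qf n ρ p ^ 2 * ∑ i, X i p ^ 2 :=
    mul_nonneg (sq_nonneg _) (Finset.sum_nonneg fun _ _ => sq_nonneg _)
  linarith

/-- The coercivity of the bulk term; this is where `n ≥ 3` enters. -/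
lemma mK_lower (hn : 3 ≤ n) {ρ : ℝ} (hρ : 0 < ρ) (u : ℝ × Eu n → ℝ) (p : ℝ × Eu n) :
    1 / (2 * n) * (ρ ^ 4 * qf n ρ p ^ 5 * en u p) ≤ mK ρ u p := by
  have hn' : (3 : ℝ) ≤ n := by exact_mod_cast hn
  have hn0 : (0 : ℝ) < n := by linarith
  have hX := qX_sq hρ p
  have hq := qf_pos hρ p
  have hk1 := k_le_one hρ p
  have hS := gs_nonneg u p
  have hY : (∑ j, X j p * D (vx j) u p) ^ 2 ≤ (∑ j, X j p ^ 2) * gs u p :=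
    Finset.sum_mul_sq_le_sq_mul_sq _ _ _
  set ε : ℝ := 1 / (2 * n) with hε
  have hεn : ε * n = 1 / 2 := by rw [hε]; field_simp
  have hε0 : 0 < ε := by positivity
  have e1 : ∑ j, ∑ i, ((if i = j then 1 else 0) * qf n ρ p + X i p * -(X j p * qf n ρ p ^ 3))
      * D (vx i) u p * D (vx j) u p
      = qf n ρ p * gs u p - qf n ρ p ^ 3 * (∑ j, X j p * D (vx j) u p) ^ 2 := by
    have a1 : ∀ j, ∑ i, ((if i = j then 1 else 0) * qf n ρ p + X i p * -(X j p * qf n ρ p ^ 3))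
        * D (vx i) u p * D (vx j) u p = qf n ρ p * D (vx j) u p ^ 2
          - qf n ρ p ^ 3 * (∑ i, X i p * D (vx i) u p) * (X j p * D (vx j) u p) := by
      intro j
      have a2 : ∀ i, ((if i = j then 1 else 0) * qf n ρ p + X i p * -(X j p * qf n ρ p ^ 3))
          * D (vx i) u p * D (vx j) u p
          = (if i = j then qf n ρ p * D (vx i) u p * D (vx j) u p else 0)
            - qf n ρ p ^ 3 * (X i p * D (vx i) u p) * (X j p * D (vx j) u p) := by
        intro i
        split_ifs <;> ring
      rw [Finset.sum_congr rfl fun i _ => a2 i, Finset.sum_sub_distrib, Finset.sum_ite_eq',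
        ← Finset.sum_mul, ← Finset.mul_sum]
      simp
      ring
    rw [Finset.sum_congr rfl fun j _ => a1 j, Finset.sum_sub_distrib, ← Finset.mul_sum,
      ← Finset.mul_sum]
    unfold gs
    ring
  have e2 : ∑ j : Fin n, ((if j = j then 1 else 0) * qf n ρ p + X j p * -(X j p * qf n ρ p ^ 3))
      = n * qf n ρ p - qf n ρ p * (qf n ρ p ^ 2 * ∑ j, X j p ^ 2) := by
    have : (n : ℝ) * qf n ρ p = ∑ _j : Fin n, qf n ρ p := by simp
    rw [this]
    simp only [Finset.mul_sum, ← Finset.sum_sub_distrib]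
    refine Finset.sum_congr rfl fun i _ => ?_
    simp
    ring
  have e3 : ∑ j, mb2 n ρ j p = -(n * (qf n ρ p ^ 3 * mβ n ρ p)
      - 3 * (qf n ρ p ^ 2 * ∑ j, X j p ^ 2) * qf n ρ p ^ 3 * mβ n ρ p
      + (qf n ρ p ^ 2 * ∑ j, X j p ^ 2) * qf n ρ p *
        (-3 * ρ ^ 2 * qf n ρ p ^ 4 + 20 * ε * (ρ ^ 4 * qf n ρ p ^ 6))) := by
    have : (n : ℝ) * (qf n ρ p ^ 3 * mβ n ρ p) = ∑ _j : Fin n, (qf n ρ p ^ 3 * mβ n ρ p) := by simp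
    have h10 : (10 : ℝ) / n = 20 * ε := by rw [hε]; field_simp; norm_num
    rw [this]
    simp only [Finset.mul_sum, Finset.sum_mul, ← Finset.sum_sub_distrib, ← Finset.sum_add_distrib,
      ← Finset.sum_neg_distrib]
    refine Finset.sum_congr rfl fun i _ => ?_
    unfold mb2
    rw [h10]
    ring
  have hmβ : mβ n ρ p = 1 / 2 * ((n - 1) + 3 * (ρ ^ 2 * qf n ρ p ^ 2))
      - 5 * ε * (ρ ^ 2 * qf n ρ p ^ 2) ^ 2 := by
    unfold mβ
    rw [hε]
    field_simp
  have hmb : mb n ρ p = 1 / 2 * ((n - 1) * qf n ρ p + ρ ^ 2 * qf n ρ p ^ 3)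
      - ε * (ρ ^ 4 * qf n ρ p ^ 5) := rfl
  unfold mK en
  rw [e1, e2, e3, hX, hmβ, hmb]
  set q := qf n ρ p
  set S := gs u p
  set Y := ∑ j, X j p * D (vx j) u p
  set r := ∑ j, X j p ^ 2
  set W := D (vt n) u p ^ 2
  set k := ρ ^ 2 * q ^ 2 with hk
  have hk0 : 0 < k := by positivity
  -- the three parts of the bulk term, in terms of `k = ρ²/(ρ² + |x|²)`
  have hgrad : q * k * S ≤ q * S - q ^ 3 * Y ^ 2 := by
    have h1 := mul_le_mul_of_nonneg_left hY (show 0 ≤ q ^ 3 by positivity)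
    have h2 : q ^ 3 * (r * S) = q * (1 - k) * S := by rw [← hX]; ring
    rw [h2] at h1
    linarith
  have hlow : 0 ≤ (n - 3 + 3 * k) * (n - 1 + 3 * k - 10 * ε * k ^ 2)
      + (1 - k) * (-6 * k + 40 * ε * k ^ 2) := by
    have : (n - 3 + 3 * k) * (n - 1 + 3 * k - 10 * ε * k ^ 2)
        + (1 - k) * (-6 * k + 40 * ε * k ^ 2)
        = (n - 3) * (n - 1) + 6 * (n - 3) * k + 15 * k ^ 2 - 10 * (ε * n) * k ^ 2
          + 70 * ε * k ^ 2 * (1 - k) := by ring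
    rw [this, hεn]
    have b1 : 0 ≤ ((n : ℝ) - 3) * (n - 1) := mul_nonneg (by linarith) (by linarith)
    have b2 : 0 ≤ 6 * ((n : ℝ) - 3) * k := mul_nonneg (by linarith) hk0.le
    have b3 : 0 ≤ 70 * ε * k ^ 2 * (1 - k) := mul_nonneg (by positivity) (by linarith)
    nlinarith [sq_nonneg k]
  have hlow' := mul_nonneg (show 0 ≤ 1 / 4 * q ^ 3 * u p ^ 2 by positivity) hlow
  have hkS : ε * (q * k ^ 2 * S) * 2 ≤ q * k * S := by
    have hε1 : ε * 2 ≤ 1 := by nlinarith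
    have b : ε * 2 * k ≤ 1 := mul_le_one₀ hε1 hk0.le hk1
    have := mul_le_mul_of_nonneg_right b (show 0 ≤ q * k * S by positivity)
    linarith
  have hfin : q * S - q ^ 3 * Y ^ 2 +
        (1 / 2 * (n * q - q * (1 - k)) - (1 / 2 * ((n - 1) * q + ρ ^ 2 * q ^ 3)
          - ε * (ρ ^ 4 * q ^ 5))) * (W - S) -
      1 / 2 * -(n * (q ^ 3 * (1 / 2 * (n - 1 + 3 * k) - 5 * ε * k ^ 2)) -
              3 * (1 - k) * q ^ 3 * (1 / 2 * (n - 1 + 3 * k) - 5 * ε * k ^ 2) +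
            (1 - k) * q * (-3 * ρ ^ 2 * q ^ 4 + 20 * ε * (ρ ^ 4 * q ^ 6))) * u p ^ 2
      = (q * S - q ^ 3 * Y ^ 2) + ε * (q * k ^ 2) * (W - S)
        + 1 / 4 * q ^ 3 * u p ^ 2 * ((n - 3 + 3 * k) * (n - 1 + 3 * k - 10 * ε * k ^ 2)
      + (1 - k) * (-6 * k + 40 * ε * k ^ 2)) := by
    rw [hk]; ring
  rw [hfin]
  have : ρ ^ 4 * q ^ 5 = q * k ^ 2 := by rw [hk]; ring
  rw [this]
  linarith

/-- The quantity by which all the terms of the current are controlled. -/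
def mZ (ρ : ℝ) (u : ℝ × Eu n → ℝ) : ℝ × Eu n → ℝ := fun p =>
  en u p + qf n ρ p ^ 2 * u p ^ 2

lemma Xq_sq_le {ρ : ℝ} (hρ : 0 < ρ) (p : ℝ × Eu n) : ∑ i, (X i p * qf n ρ p) ^ 2 ≤ 1 := by
  have h := qX_sq hρ p
  have : ∑ i, (X i p * qf n ρ p) ^ 2 = qf n ρ p ^ 2 * ∑ i, X i p ^ 2 := by
    rw [Finset.mul_sum]
    exact Finset.sum_congr rfl fun i _ => by ring
  rw [this, h]
  have : 0 ≤ ρ ^ 2 * qf n ρ p ^ 2 := by positivity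
  linarith

lemma mM_sq_le (hn : 3 ≤ n) {ρ : ℝ} (hρ : 0 < ρ) (u : ℝ × Eu n → ℝ) (p : ℝ × Eu n) :
    mM ρ u p ^ 2 ≤ 2 * n ^ 2 * mZ ρ u p := by
  have hn' : (3 : ℝ) ≤ n := by exact_mod_cast hn
  have hS := gs_nonneg u p
  have hq := qf_pos hρ p
  have hk1 := k_le_one hρ p
  have h1 : (∑ i, ma n ρ i p * D (vx i) u p) ^ 2 ≤ gs u p := by
    refine (Finset.sum_mul_sq_le_sq_mul_sq _ _ _).trans ?_
    exact mul_le_of_le_one_left hS (Xq_sq_le hρ p)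
  have hε1 : 1 / (2 * (n : ℝ)) ≤ 1 := (div_le_one (by positivity)).2 (by linarith)
  have hε0 : 0 < 1 / (2 * (n : ℝ)) := by positivity
  have hb : mb n ρ p ^ 2 ≤ n ^ 2 * qf n ρ p ^ 2 := by
    have e : mb n ρ p = qf n ρ p * (1 / 2 * (n - 1 + ρ ^ 2 * qf n ρ p ^ 2)
        - 1 / (2 * n) * (ρ ^ 2 * qf n ρ p ^ 2) ^ 2) := by unfold mb; ring
    rw [e, mul_pow, mul_comm]
    refine mul_le_mul_of_nonneg_right ?_ (sq_nonneg _)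
    set k := ρ ^ 2 * qf n ρ p ^ 2
    have hk0 : 0 ≤ k := by positivity
    have hk2 : k ^ 2 ≤ 1 := pow_le_one₀ hk0 hk1
    have hk3 : 0 ≤ 1 / (2 * (n : ℝ)) * k ^ 2 := by positivity
    have hk4 : 1 / (2 * (n : ℝ)) * k ^ 2 ≤ 1 := mul_le_one₀ hε1 (by positivity) hk2
    refine sq_le_sq' ?_ ?_ <;> linarith
  have hb' := mul_le_mul_of_nonneg_right hb (sq_nonneg (u p))
  have h2 : mM ρ u p ^ 2 ≤ 2 * (∑ i, ma n ρ i p * D (vx i) u p) ^ 2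
      + 2 * (mb n ρ p ^ 2 * u p ^ 2) := by
    unfold mM
    nlinarith [sq_nonneg (∑ i, ma n ρ i p * D (vx i) u p - mb n ρ p * u p)]
  have h3 : gs u p ≤ n ^ 2 * en u p := by
    have a : gs u p ≤ en u p := by unfold en; linarith [sq_nonneg (D (vt n) u p)]
    have b : (1 : ℝ) ≤ n ^ 2 := by nlinarith
    have c := mul_le_mul_of_nonneg_right b (en_nonneg u p)
    linarith
  unfold mZ
  linarith

lemma tM_le (hn : 3 ≤ n) {ρ : ℝ} (hρ : 0 < ρ) (u : ℝ × Eu n → ℝ) (p : ℝ × Eu n) :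
    |D (vt n) u p * mM ρ u p| ≤ (n ^ 2 + 1) * mZ ρ u p := by
  have h1 := mM_sq_le hn hρ u p
  have h2 : D (vt n) u p ^ 2 ≤ mZ ρ u p := by
    have := gs_nonneg u p
    have : 0 ≤ qf n ρ p ^ 2 * u p ^ 2 := by positivity
    unfold mZ en
    linarith
  rw [abs_le]
  constructor <;>
    nlinarith [sq_nonneg (D (vt n) u p - mM ρ u p), sq_nonneg (D (vt n) u p + mM ρ u p)]

lemma mV_le (hn : 3 ≤ n) {ρ : ℝ} (hρ : 0 < ρ) (u : ℝ × Eu n → ℝ) (j : Fin n) (p : ℝ × Eu n) :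
    |mV ρ u j p| ≤ (n ^ 2 + n + 4) * mZ ρ u p := by
  have hn' : (3 : ℝ) ≤ n := by exact_mod_cast hn
  have hS := gs_nonneg u p
  have hM := mM_sq_le hn hρ u p
  have hk1 := k_le_one hρ p
  have hq := qf_pos hρ p
  have hA : 0 ≤ qf n ρ p ^ 2 * u p ^ 2 := by positivity
  have hj : D (vx j) u p ^ 2 ≤ gs u p :=
    Finset.single_le_sum (f := fun i => D (vx i) u p ^ 2) (fun _ _ => sq_nonneg _)
      (Finset.mem_univ j)
  have hXq : |ma n ρ j p| ≤ 1 := by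
    have : (X j p * qf n ρ p) ^ 2 ≤ 1 := (Finset.single_le_sum
      (f := fun i => (X i p * qf n ρ p) ^ 2) (fun _ _ => sq_nonneg _)
      (Finset.mem_univ j)).trans (Xq_sq_le hρ p)
    exact (sq_le_one_iff_abs_le_one _).1 this
  have hβ : |mβ n ρ p| ≤ n + 4 := by
    have e : mβ n ρ p = 1 / 2 * (n - 1 + 3 * (ρ ^ 2 * qf n ρ p ^ 2))
        - 5 / (2 * n) * (ρ ^ 2 * qf n ρ p ^ 2) ^ 2 := by unfold mβ; ring
    rw [e]
    set k := ρ ^ 2 * qf n ρ p ^ 2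
    have hk0 : 0 ≤ k := by positivity
    have hk2 : k ^ 2 ≤ 1 := pow_le_one₀ hk0 hk1
    have hε1 : 5 / (2 * (n : ℝ)) ≤ 1 := (div_le_one (by positivity)).2 (by linarith)
    have hk3 : 0 ≤ 5 / (2 * (n : ℝ)) * k ^ 2 := by positivity
    have hk4 : 5 / (2 * (n : ℝ)) * k ^ 2 ≤ 1 := mul_le_one₀ hε1 (by positivity) hk2
    rw [abs_le]
    constructor <;> linarith
  have h1 : |D (vx j) u p * mM ρ u p| ≤ 1 / 2 * (gs u p + mM ρ u p ^ 2) := by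
    rw [abs_le]
    constructor <;>
      nlinarith [sq_nonneg (D (vx j) u p - mM ρ u p), sq_nonneg (D (vx j) u p + mM ρ u p)]
  have h2 : |ma n ρ j p * (gs u p - D (vt n) u p ^ 2)| ≤ en u p := by
    rw [abs_mul]
    have : |gs u p - D (vt n) u p ^ 2| ≤ en u p := by
      unfold en
      have := sq_nonneg (D (vt n) u p)
      rw [abs_le]
      constructor <;> linarith
    exact (mul_le_of_le_one_left (abs_nonneg _) hXq).trans this
  have h3 : |mb1 n ρ j p * u p ^ 2| ≤ (n + 4) * (qf n ρ p ^ 2 * u p ^ 2) := by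
    have e : mb1 n ρ j p * u p ^ 2
        = -(ma n ρ j p * mβ n ρ p * (qf n ρ p ^ 2 * u p ^ 2)) := by
      unfold mb1 ma; ring
    rw [e, abs_neg, abs_mul, abs_mul, abs_of_nonneg hA]
    refine mul_le_mul_of_nonneg_right ?_ hA
    exact (mul_le_of_le_one_left (abs_nonneg _) hXq).trans hβ
  have h4 : |mV ρ u j p| ≤ |D (vx j) u p * mM ρ u p|
      + (1 / 2 * |ma n ρ j p * (gs u p - D (vt n) u p ^ 2)| + 1 / 2 * |mb1 n ρ j p * u p ^ 2|) := by
    unfold mV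
    refine (abs_add_le _ _).trans (add_le_add (abs_neg _).le ((abs_add_le _ _).trans ?_))
    rw [abs_mul, abs_mul (1 / 2 : ℝ) (mb1 n ρ j p * u p ^ 2)]
    norm_num
  have h5 : gs u p ≤ en u p := by unfold en; linarith [sq_nonneg (D (vt n) u p)]
  have h6 := en_nonneg u p
  have h7 : mZ ρ u p = en u p + qf n ρ p ^ 2 * u p ^ 2 := rfl
  rw [h7] at hM ⊢
  have h8 : 0 ≤ (n : ℝ) * en u p := by positivity
  have h9 : 0 ≤ (n : ℝ) * (qf n ρ p ^ 2 * u p ^ 2) := by positivity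
  linarith

/-- The divergence of the Morawetz current, multiplied by the cutoff. -/
lemma morawetz_div (hn : 3 ≤ n) {ρ : ℝ} (hρ : 0 < ρ) {u : ℝ × Eu n → ℝ} (hu : Sm u)
    {R c : ℝ} (hR : 0 < R) (hc : ∀ p, dcut n R p ≤ c / R) (p : ℝ × Eu n) :
    D (vt n) (fun p => cut n R p * (D (vt n) u p * mM ρ u p)) p
      + ∑ j, D (vx j) (fun p => cut n R p * mV ρ u j p) p
      ≤ cut n R p * (box u p * mM ρ u p)
        - 1 / (2 * n) * (cut n R p * (ρ ^ 4 * qf n ρ p ^ 5 * en u p))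
        + c / R * ((n + 1) * (n ^ 2 + n + 4)) * mZ ρ u p := by
  have hP : Sm fun p => D (vt n) u p * mM ρ u p := (hu.D _).mul (mM_sm hρ hu)
  have h1 := ((cut_vt R).mul (hP.hd (vt n))).D_eq (Sm.diff ((cut_sm R).mul hP)) p
  have h2 : ∀ j, _ := fun j => ((cut_vx R j).mul ((mV_sm hρ hu j).hd (vx j))).D_eq
    (Sm.diff ((cut_sm R).mul (mV_sm hρ hu j))) p
  rw [h1, Finset.sum_congr rfl fun j _ => h2 j, Finset.sum_add_distrib, ← Finset.mul_sum]
  have hid := morawetz_identity hρ hu p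
  have hK := mul_le_mul_of_nonneg_left (mK_lower hn hρ u p) (cut_nonneg R p)
  have hZ0 : 0 ≤ mZ ρ u p := by
    have := en_nonneg u p
    have : 0 ≤ qf n ρ p ^ 2 * u p ^ 2 := by positivity
    unfold mZ
    linarith
  have hd := dcut_nonneg hR p
  have hn0 : (0 : ℝ) ≤ n := by positivity
  have hX1 : ∀ j, |X j p / jf n p| ≤ 1 := by
    intro j
    have hj0 : 0 < jf n p := by unfold jf; positivity
    rw [abs_div, abs_of_pos hj0]
    refine (div_le_one hj0).2 (le_trans ?_ (norm_le_jf p))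
    exact PiLp.norm_apply_le p.2 j
  have he1 : -dcut n R p * (D (vt n) u p * mM ρ u p)
      ≤ dcut n R p * ((n ^ 2 + n + 4) * mZ ρ u p) := by
    have := (abs_le.1 (tM_le hn hρ u p)).1
    have a := mul_le_mul_of_nonneg_left this hd
    have b : 0 ≤ dcut n R p * ((n + 3) * mZ ρ u p) := by positivity
    linarith
  have he2 : ∑ j, -(dcut n R p * (X j p / jf n p)) * mV ρ u j p
      ≤ n * (dcut n R p * ((n ^ 2 + n + 4) * mZ ρ u p)) := by
    have : ∀ j ∈ Finset.univ, -(dcut n R p * (X j p / jf n p)) * mV ρ u j p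
        ≤ dcut n R p * ((n ^ 2 + n + 4) * mZ ρ u p) := by
      intro j _
      have e : -(dcut n R p * (X j p / jf n p)) * mV ρ u j p
        = dcut n R p * (-((X j p / jf n p) * mV ρ u j p)) := by ring
      rw [e]
      refine mul_le_mul_of_nonneg_left ((neg_le_abs _).trans ?_) hd
      rw [abs_mul]
      exact (mul_le_of_le_one_left (abs_nonneg _) (hX1 j)).trans (mV_le hn hρ u j p)
    simpa using Finset.sum_le_card_nsmul _ _ _ this
  have he3 := mul_le_mul_of_nonneg_right (hc p)
    (show 0 ≤ (n + 1) * (n ^ 2 + n + 4) * mZ ρ u p by positivity)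
  have hid' := congrArg (fun y => cut n R p * y) hid
  simp only [mul_add, mul_sub] at hid'
  linarith

/-! ### The Morawetz estimate at a fixed scale -/

lemma mZ_nonneg (ρ : ℝ) (u : ℝ × Eu n → ℝ) (p : ℝ × Eu n) : 0 ≤ mZ ρ u p :=
  add_nonneg (en_nonneg _ _) (by positivity)

lemma mZ_cont {ρ : ℝ} (hρ : 0 < ρ) {u : ℝ × Eu n → ℝ} (hu : Sm u) : Continuous (mZ ρ u) := by
  have h1 := (en_sm hu).continuous
  have h2 := (qf_sm (n := n) hρ).continuous
  have h3 := hu.continuous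
  unfold mZ
  fun_prop

/-- Hardy's inequality turns the energy bound into a bound for `mZ`. It is applied on a ball that
contains the support of `u` at time `t`. -/
lemma int_mZ_le (hn : 3 ≤ n) {ρ : ℝ} (hρ : 0 < ρ) {u : ℝ × Eu n → ℝ} (hu : Sm u) {t B : ℝ}
    (hen : ∀ R', ∫ x in Bl n R', en u (t, x) ≤ B ^ 2)
    (hsupp : ∃ R, ∀ x : Eu n, R < ‖x‖ → u (t, x) = 0) (R : ℝ) :
    ∫ x in Bl n R, mZ ρ u (t, x) ≤ 5 * B ^ 2 := by
  obtain ⟨R0, hR0⟩ := hsupp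
  have h1 := (en_sm hu).continuous
  have h2 := (qf_sm (n := n) hρ).continuous
  have h3 := hu.continuous
  have h4 := (gs_sm hu).continuous
  refine (int_mono_set (mZ_cont hρ hu) (mZ_nonneg ρ u) (le_max_left R R0)).trans ?_
  have hh := hardy (t := t) hn hu hρ (R := max R R0)
    (fun x hx => hR0 x ((le_max_right _ _).trans_lt hx))
  have hg : ∫ x in Bl n (max R R0), gs u (t, x) ≤ ∫ x in Bl n (max R R0), en u (t, x) :=
    int_mono h4 h1 fun x => by
      have := sq_nonneg (D (vt n) u (t, x))
      simp only [en]; linarith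
  have hadd : ∫ x in Bl n (max R R0), mZ ρ u (t, x) = (∫ x in Bl n (max R R0), en u (t, x))
      + ∫ x in Bl n (max R R0), qf n ρ (t, x) ^ 2 * u (t, x) ^ 2 :=
    integral_add (int_on h1 _ _) (int_on (f := fun p => qf n ρ p ^ 2 * u p ^ 2) (by fun_prop) _ _)
  rw [hadd]
  linarith [hen (max R R0)]

/-- The constant in the Morawetz estimate at a fixed scale; it depends on the dimension only. -/
def mC (n : ℕ) : ℝ := 2 * n * (10 * (n ^ 2 + 1) + 4 * n + 1)

/-- The Morawetz estimate at scale `ρ`, with a constant independent of `ρ`, `T` and the radius of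
the ball. -/
lemma morawetz (hn : 3 ≤ n) {ρ : ℝ} (hρ : 0 < ρ) {u : ℝ × Eu n → ℝ} (hu : Sm u) {T B : ℝ}
    (hT : 0 ≤ T) (hB : 0 ≤ B)
    (hen : ∀ t ∈ Icc 0 T, ∀ R', ∫ x in Bl n R', en u (t, x) ≤ B ^ 2)
    (hN : ∀ R, 0 < R →
      ∫ t in (0 : ℝ)..T, √(∫ x in Bl n (2 * R), cut n R (t, x) * box u (t, x) ^ 2) ≤ B)
    (hsupp : ∀ t, ∃ R, ∀ x : Eu n, R < ‖x‖ → u (t, x) = 0) (R' : ℝ) :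
    ∫ t in (0 : ℝ)..T, ∫ x in Bl n R', ρ ^ 4 * qf n ρ (t, x) ^ 5 * en u (t, x) ≤ mC n * B ^ 2 := by
  have hn' : (3 : ℝ) ≤ n := by exact_mod_cast hn
  have hu1 := (hu.D (vt n)).continuous
  have henc := (en_sm hu).continuous
  have hb := (box_sm hu).continuous
  have hq := (qf_sm (n := n) hρ).continuous
  have hM := (mM_sm hρ hu).continuous
  have hZ := mZ_cont hρ hu
  have hmZ : ∀ t ∈ Icc 0 T, ∀ R, ∫ x in Bl n R, mZ ρ u (t, x) ≤ 5 * B ^ 2 := fun t ht R =>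
    int_mZ_le hn hρ hu (hen t ht) (hsupp t) R
  obtain ⟨c, hc0, hc⟩ := exists_dcut_bound
  set L : ℝ := (n + 1) * (n ^ 2 + n + 4) with hL
  have hL0 : 0 < L := by positivity
  -- the last summand makes the error from the cutoff at most `B²`
  set R : ℝ := √(1 + R' ^ 2) + T + 1 + 5 * T * c * L with hRdef
  have hR : 0 < R := by positivity
  have hη := (cut_sm (n := n) R).continuous
  set κ : ℝ := c / R * L with hκ
  have hκ0 : 0 ≤ κ := by positivity
  have hκT : κ * 5 * T ≤ 1 := by
    have h1 : 5 * T * c * L ≤ R := by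
      have := Real.sqrt_nonneg (1 + R' ^ 2)
      linarith
    have : κ * 5 * T = 5 * T * c * L / R := by rw [hκ]; ring
    rw [this]
    exact (div_le_one hR).2 h1
  set N' : ℝ → ℝ := fun s => √(∫ x in Bl n (2 * R), cut n R (s, x) * box u (s, x) ^ 2) with hN'
  have hN'c : Continuous N' := (cont_int (f := fun p => cut n R p * box u p ^ 2)
    (by fun_prop) _).sqrt
  set G : ℝ → ℝ := fun s => ∫ x in Bl n (2 * R),
    cut n R (s, x) * (ρ ^ 4 * qf n ρ (s, x) ^ 5 * en u (s, x)) with hG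
  have hGc : Continuous G := cont_int (f := fun p => cut n R p * (ρ ^ 4 * qf n ρ p ^ 5 * en u p))
    (by fun_prop) _
  have hPs : Sm fun p => cut n R p * (D (vt n) u p * mM ρ u p) :=
    (cut_sm R).mul ((hu.D _).mul (mM_sm hρ hu))
  have hVs : ∀ j, Sm fun p => cut n R p * mV ρ u j p := fun j => (cut_sm R).mul (mV_sm hρ hu j)
  have hdiv := divergence (P := fun p => cut n R p * (D (vt n) u p * mM ρ u p))
    (V := fun j p => cut n R p * mV ρ u j p) hPs hVs (s := T) (R := 2 * R) hT
    (fun i t ht x hx => by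
      have h := cut_eq_zero hR (t, x) ht hx
      simp only [h]; simp)
  have hcd : Continuous fun p => D (vt n) (fun p => cut n R p * (D (vt n) u p * mM ρ u p)) p
      + ∑ j, D (vx j) (fun p => cut n R p * mV ρ u j p) p :=
    (Sm.D hPs _).continuous.add (continuous_finsetSum _ fun j _ => (Sm.D (hVs j) _).continuous)
  -- the boundary terms at times `0` and `T`
  have hP : ∀ t ∈ Icc 0 T,
      |∫ x in Bl n (2 * R), cut n R (t, x) * (D (vt n) u (t, x) * mM ρ u (t, x))|
        ≤ (n ^ 2 + 1) * (5 * B ^ 2) := by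
    intro t ht
    refine (abs_integral_le_integral_abs).trans ?_
    have : ∫ x in Bl n (2 * R), |cut n R (t, x) * (D (vt n) u (t, x) * mM ρ u (t, x))|
        ≤ ∫ x in Bl n (2 * R), (n ^ 2 + 1) * mZ ρ u (t, x) := by
      refine int_mono (f := fun p => |cut n R p * (D (vt n) u p * mM ρ u p)|)
        (g := fun p => (n ^ 2 + 1) * mZ ρ u p) (by fun_prop) (by fun_prop) fun x => ?_
      refine le_trans ?_ (tM_le hn hρ u (t, x))
      rw [abs_mul, abs_of_nonneg (cut_nonneg R _)]
      exact mul_le_of_le_one_left (abs_nonneg _) (cut_le_one _ _)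
    refine this.trans ?_
    rw [integral_const_mul]
    exact mul_le_mul_of_nonneg_left (hmZ t ht _) (by positivity)
  have hMb : ∀ t ∈ Icc 0 T,
      √(∫ x in Bl n (2 * R), cut n R (t, x) * mM ρ u (t, x) ^ 2) ≤ 4 * n * B := by
    intro t ht
    rw [Real.sqrt_le_left (by positivity)]
    have : ∫ x in Bl n (2 * R), cut n R (t, x) * mM ρ u (t, x) ^ 2
        ≤ ∫ x in Bl n (2 * R), 2 * n ^ 2 * mZ ρ u (t, x) := by
      refine int_mono (f := fun p => cut n R p * mM ρ u p ^ 2)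
        (g := fun p => 2 * n ^ 2 * mZ ρ u p) (by fun_prop) (by fun_prop) fun x => ?_
      exact (mul_le_of_le_one_left (sq_nonneg _) (cut_le_one _ _)).trans (mM_sq_le hn hρ u _)
    rw [integral_const_mul] at this
    have h2 := mul_le_mul_of_nonneg_left (hmZ t ht (2 * R)) (show (0 : ℝ) ≤ 2 * n ^ 2 by positivity)
    have h3 : 0 ≤ (n : ℝ) ^ 2 * B ^ 2 := by positivity
    nlinarith
  have hstep : ∫ t in (0 : ℝ)..T, ∫ x in Bl n (2 * R),
      (D (vt n) (fun p => cut n R p * (D (vt n) u p * mM ρ u p)) (t, x)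
        + ∑ j, D (vx j) (fun p => cut n R p * mV ρ u j p) (t, x))
      ≤ ∫ t in (0 : ℝ)..T, (4 * n * B * N' t - 1 / (2 * n) * G t + κ * (5 * B ^ 2)) := by
    refine intervalIntegral.integral_mono_on hT ?_ ?_ ?_
    · exact (cont_int hcd _).intervalIntegrable _ _
    · exact Continuous.intervalIntegrable (by fun_prop) _ _
    · intro t ht
      have e1 := int_mono hcd (t := t) (R := 2 * R) (g := fun p => cut n R p * (box u p * mM ρ u p)
        - 1 / (2 * n) * (cut n R p * (ρ ^ 4 * qf n ρ p ^ 5 * en u p)) + κ * mZ ρ u p)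
        (by fun_prop) fun x => morawetz_div hn hρ hu hR (fun p => hc n R hR p) (t, x)
      refine e1.trans ?_
      have i1 := int_on (f := fun p => cut n R p * (box u p * mM ρ u p)) (by fun_prop) t (2 * R)
      have i2 := int_on (f := fun p => 1 / (2 * n) * (cut n R p *
        (ρ ^ 4 * qf n ρ p ^ 5 * en u p))) (by fun_prop) t (2 * R)
      have i3 := int_on (f := fun p => κ * mZ ρ u p) (by fun_prop) t (2 * R)
      have e2 : ∫ x in Bl n (2 * R), (cut n R (t, x) * (box u (t, x) * mM ρ u (t, x))
        - 1 / (2 * n) * (cut n R (t, x) * (ρ ^ 4 * qf n ρ (t, x) ^ 5 * en u (t, x)))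
        + κ * mZ ρ u (t, x)) = (∫ x in Bl n (2 * R), cut n R (t, x) * (box u (t, x) * mM ρ u (t, x)))
        - 1 / (2 * n) * G t + κ * ∫ x in Bl n (2 * R), mZ ρ u (t, x) := by
        rw [← integral_const_mul, ← integral_const_mul, ← integral_sub i1 i2]
        exact integral_add (i1.sub i2) i3
      rw [e2]
      have e3 := cauchy_schwarz hη hb hM (cut_nonneg R) t (2 * R)
      have e4 := mul_le_mul_of_nonneg_left (hMb t ht) (Real.sqrt_nonneg
        (∫ x in Bl n (2 * R), cut n R (t, x) * box u (t, x) ^ 2))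
      have e5 := mul_le_mul_of_nonneg_left (hmZ t ht (2 * R)) hκ0
      have e6 : √(∫ x in Bl n (2 * R), cut n R (t, x) * box u (t, x) ^ 2) = N' t := rfl
      rw [e6] at e3 e4
      linarith
  have hintg : ∫ t in (0 : ℝ)..T, (4 * n * B * N' t - 1 / (2 * n) * G t + κ * (5 * B ^ 2))
      = 4 * n * B * (∫ t in (0 : ℝ)..T, N' t) - 1 / (2 * n) * (∫ t in (0 : ℝ)..T, G t)
        + κ * 5 * T * B ^ 2 := by
    have j1 : IntervalIntegrable (fun t => 4 * n * B * N' t) volume 0 T :=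
      Continuous.intervalIntegrable (by fun_prop) _ _
    have j2 : IntervalIntegrable (fun t => 1 / (2 * n) * G t) volume 0 T :=
      Continuous.intervalIntegrable (by fun_prop) _ _
    rw [intervalIntegral.integral_add (j1.sub j2) (by simp), intervalIntegral.integral_sub j1 j2,
      intervalIntegral.integral_const_mul, intervalIntegral.integral_const_mul,
      intervalIntegral.integral_const]
    simp only [smul_eq_mul]
    ring
  have hmain : 1 / (2 * n) * (∫ t in (0 : ℝ)..T, G t)
      ≤ (10 * ((n : ℝ) ^ 2 + 1) + 4 * n + 1) * B ^ 2 := by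
    have a1 := abs_le.1 (hP 0 ⟨le_rfl, hT⟩)
    have a2 := abs_le.1 (hP T ⟨hT, le_rfl⟩)
    have a3 := mul_le_mul_of_nonneg_left (hN R hR) (show 0 ≤ 4 * n * B by positivity)
    have a4 := mul_le_mul_of_nonneg_right hκT (sq_nonneg B)
    have a5 : ∫ t in (0 : ℝ)..T, N' t
      = ∫ t in (0 : ℝ)..T, √(∫ x in Bl n (2 * R), cut n R (t, x) * box u (t, x) ^ 2) := rfl
    rw [hintg, ← hdiv, a5] at hstep
    linarith [a1.1, a1.2, a2.1, a2.2]
  have hGB : ∫ t in (0 : ℝ)..T, G t ≤ mC n * B ^ 2 := by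
    have := mul_le_mul_of_nonneg_left hmain (show (0 : ℝ) ≤ 2 * n by positivity)
    have h2 : (2 * n : ℝ) * (1 / (2 * n) * ∫ t in (0 : ℝ)..T, G t) = ∫ t in (0 : ℝ)..T, G t := by
      field_simp
    rw [h2] at this
    unfold mC
    linarith
  refine le_trans ?_ hGB
  refine intervalIntegral.integral_mono_on hT ?_ (hGc.intervalIntegrable _ _) fun t ht => ?_
  · exact (cont_int (f := fun p => ρ ^ 4 * qf n ρ p ^ 5 * en u p) (by fun_prop) _).intervalIntegrable
      _ _
  have hsq : R' ≤ √(1 + R' ^ 2) := Real.le_sqrt_of_sq_le (by linarith)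
  have hpos : 0 ≤ 5 * T * c * L := by positivity
  have hR' : R' ≤ 2 * R := by linarith
  have hw : ∀ p, 0 ≤ ρ ^ 4 * qf n ρ p ^ 5 * en u p := fun p =>
    mul_nonneg (mul_nonneg (by positivity) (pow_nonneg (qf_pos hρ p).le _)) (en_nonneg _ _)
  refine le_trans ?_ (int_mono_set (f := fun p => cut n R p * (ρ ^ 4 * qf n ρ p ^ 5 * en u p))
    (by fun_prop) (fun p => mul_nonneg (cut_nonneg R p) (hw p)) hR')
  refine setIntegral_mono_on (int_on (f := fun p => ρ ^ 4 * qf n ρ p ^ 5 * en u p)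
    (by fun_prop) _ _)
    (int_on (f := fun p => cut n R p * (ρ ^ 4 * qf n ρ p ^ 5 * en u p)) (by fun_prop) _ _)
    measurableSet_closedBall fun x hx => ?_
  have h1 : cut n R (t, x) = 1 := by
    apply cut_eq_one hR
    have hx' : ‖x‖ ≤ R' := by simpa using hx
    have : jf n (t, x) ≤ √(1 + R' ^ 2) := by
      unfold jf
      gcongr
    have := ht.2
    simp only
    linarith
  simp only [h1]
  linarith

/-! ### From the extended-real norms to real integrals -/

lemma td_eq (hf : Sm f) : td (fun t x => f (t, x)) = fun t x => D (vt n) f (t, x) := by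
  funext t x
  exact (hasDerivAt_time hf t x).deriv

lemma sd_eq (hf : Sm f) (i : Fin n) (t : ℝ) :
    sd i (fun x => f (t, x)) = fun x => D (vx i) f (t, x) := by
  funext x
  exact D_slice_vx hf t x i

lemma dAlembert_eq (hf : Sm f) (t : ℝ) (x : Eu n) :
    dAlembert (fun t x => f (t, x)) t x = box f (t, x) := by
  unfold dAlembert box
  rw [td_eq hf, td_eq (hf.D _)]
  simp only [sd_eq hf, sd_eq (hf.D _)]

lemma gradMag_eq (hf : Sm f) (t : ℝ) (x : Eu n) :
    gradMag (fun t x => f (t, x)) t x = √(en f (t, x)) := by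
  unfold gradMag en gs
  congr 1
  rw [Fin.sum_univ_succ]
  simp [pd, td_eq hf, sd_eq hf]

lemma eLpNorm_two_sq {α : Type*} [MeasurableSpace α] (μ : Measure α) (h : α → ℝ) :
    eLpNorm h 2 μ ^ 2 = ∫⁻ x, ENNReal.ofReal (h x ^ 2) ∂μ := by
  have := eLpNorm_nnreal_pow_eq_lintegral (μ := μ) (f := h) (p := 2) (by norm_num)
  simp only [NNReal.coe_ofNat, ENNReal.rpow_ofNat, ENNReal.coe_ofNat] at this
  rw [this]
  refine lintegral_congr fun x => ?_
  rw [← ofReal_norm, ← ENNReal.ofReal_pow (norm_nonneg _), Real.norm_eq_abs, sq_abs]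

lemma ofReal_int_ball (hf : Continuous f) (h0 : ∀ p, 0 ≤ f p) (t R : ℝ) :
    ENNReal.ofReal (∫ x in Bl n R, f (t, x)) = ∫⁻ x in Bl n R, ENNReal.ofReal (f (t, x)) :=
  ofReal_integral_eq_lintegral_ofReal (int_on hf t R) (ae_of_all _ fun _ => h0 _)

lemma ofReal_int_time {h : ℝ → ℝ} (hc : Continuous h) (h0 : ∀ t, 0 ≤ h t) {T : ℝ} (hT : 0 ≤ T) :
    ENNReal.ofReal (∫ t in (0 : ℝ)..T, h t) = ∫⁻ t in Icc 0 T, ENNReal.ofReal (h t) := by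
  rw [intervalIntegral.integral_of_le hT, ← integral_Icc_eq_integral_Ioc]
  exact ofReal_integral_eq_lintegral_ofReal
    (hc.continuousOn.integrableOn_compact isCompact_Icc) (ae_of_all _ h0)

/-- A bound for the integrals over all balls passes to the integral over `[0,T] × ℝⁿ`. -/
lemma lintegral_le_of_balls (hf : Continuous f) (h0 : ∀ p, 0 ≤ f p) {T c : ℝ} (hT : 0 ≤ T)
    (hb : ∀ R, ∫ t in (0 : ℝ)..T, ∫ x in Bl n R, f (t, x) ≤ c) :
    ∫⁻ p, ENNReal.ofReal (f p) ∂((volume.restrict (Icc 0 T)).prod (volume.restrict univ))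
      ≤ ENNReal.ofReal c := by
  rw [Measure.restrict_univ, ← setLIntegral_univ]
  have hU : (univ : Set (ℝ × Eu n)) = ⋃ k : ℕ, univ ×ˢ Bl n k := by
    refine (eq_univ_of_forall fun p => ?_).symm
    obtain ⟨k, hk⟩ := exists_nat_ge ‖p.2‖
    exact mem_iUnion.2 ⟨k, mem_univ _, by simpa [Bl] using hk⟩
  rw [hU, setLIntegral_iUnion_of_directed]
  · refine iSup_le fun k => ?_
    rw [← Measure.prod_restrict, Measure.restrict_univ, lintegral_prod _ (by fun_prop)]
    refine le_trans (le_of_eq ?_) (ENNReal.ofReal_le_ofReal (hb k))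
    rw [ofReal_int_time (cont_int hf _) (fun t => integral_nonneg fun x => h0 _) hT]
    exact lintegral_congr fun t => (ofReal_int_ball hf h0 t k).symm
  · refine Monotone.directed_le fun k l hkl => ?_
    exact prod_mono le_rfl (Metric.closedBall_subset_closedBall (by exact_mod_cast hkl))

/-! ### Dyadic summation -/

/-- The weight `⟨x⟩^{-1-2δ}` is dominated at `x` by the Morawetz weight at the dyadic scale
`2^k ≈ ⟨x⟩`. -/
lemma exists_scale (δ : ℝ) (hδ : 0 < δ) (p : ℝ × Eu n) :
    ∃ k : ℕ, jap p.2 ^ (-1 - 2 * δ)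
      ≤ 243 * ((2 : ℝ) ^ (-2 * δ)) ^ k * (((2 : ℝ) ^ k) ^ 4 * qf n (2 ^ k) p ^ 5) := by
  have h1 : 1 ≤ jap p.2 := by
    unfold jap
    exact Real.one_le_sqrt.2 (by nlinarith [sq_nonneg ‖p.2‖])
  obtain ⟨k, hk1, hk2⟩ := exists_nat_pow_near h1 one_lt_two
  refine ⟨k, ?_⟩
  set ρ : ℝ := 2 ^ k with hρdef
  have hρ : 0 < ρ := by positivity
  have hq := qf_pos hρ p
  have hJ : jap p.2 ^ 2 = 1 + ‖p.2‖ ^ 2 := by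
    unfold jap
    exact Real.sq_sqrt (by positivity)
  have hx : ‖p.2‖ ^ 2 ≤ 4 * ρ ^ 2 := by
    rw [pow_succ] at hk2
    nlinarith
  have hqq : qf n ρ p ^ 2 * (ρ ^ 2 + ‖p.2‖ ^ 2) = 1 := by
    have := qf_sq hρ p
    have e : ‖p.2‖ ^ 2 = ∑ j, X j p ^ 2 := by simp [EuclideanSpace.norm_sq_eq, X]
    rwa [← e] at this
  have h3 : 1 ≤ 3 * (ρ * qf n ρ p) := by
    have : 1 ≤ 9 * (ρ * qf n ρ p) ^ 2 := by
      have := mul_le_mul_of_nonneg_left hx (sq_nonneg (qf n ρ p))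
      nlinarith [sq_nonneg (ρ * qf n ρ p)]
    have h0 : 0 < ρ * qf n ρ p := by positivity
    nlinarith
  have h5 : 1 ≤ 243 * (ρ * qf n ρ p) ^ 5 := by
    have := one_le_pow₀ h3 (n := 5)
    rw [mul_pow] at this
    norm_num at this ⊢
    exact this
  have hA : jap p.2 ^ (-1 - 2 * δ) ≤ ρ ^ (-1 - 2 * δ) :=
    Real.rpow_le_rpow_of_nonpos hρ hk1 (by linarith)
  have hB : ρ ^ (-1 - 2 * δ) = ρ⁻¹ * ((2 : ℝ) ^ (-2 * δ)) ^ k := by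
    rw [show -1 - 2 * δ = -1 + -2 * δ by ring, Real.rpow_add hρ, Real.rpow_neg_one, hρdef,
      ← Real.rpow_natCast, ← Real.rpow_natCast, ← Real.rpow_mul zero_le_two,
      ← Real.rpow_mul zero_le_two, mul_comm (k : ℝ)]
  refine hA.trans ?_
  rw [hB]
  have hpos : 0 ≤ ρ⁻¹ * ((2 : ℝ) ^ (-2 * δ)) ^ k := by positivity
  refine (le_mul_of_one_le_right hpos h5).trans (le_of_eq ?_)
  field_simp

/-- The sum of the dyadic coefficients. -/
def mS (δ : ℝ) : ℝ := ∑' k : ℕ, 243 * ((2 : ℝ) ^ (-2 * δ)) ^ k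

lemma mS_eq {δ : ℝ} (hδ : 0 < δ) :
    ∑' k : ℕ, ENNReal.ofReal (243 * ((2 : ℝ) ^ (-2 * δ)) ^ k) = ENNReal.ofReal (mS δ) := by
  refine (ENNReal.ofReal_tsum_of_nonneg (fun k => by positivity) ?_).symm
  refine (summable_geometric_of_lt_one (by positivity) ?_).mul_left _
  exact Real.rpow_lt_one_of_one_lt_of_neg one_lt_two (by linarith)

lemma mS_nonneg (δ : ℝ) : 0 ≤ mS δ := tsum_nonneg fun k => by positivity

lemma mC_nonneg (n : ℕ) : 0 ≤ mC n := by unfold mC; positivity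

/-- Morawetz bounds that are uniform in the scale add up to the weighted estimate. -/
lemma weighted_le {δ : ℝ} (hδ : 0 < δ) {u : ℝ × Eu n → ℝ} (hu : Sm u) {T c : ℝ} (hT : 0 ≤ T)
    (hm : ∀ ρ, 0 < ρ → ∀ R,
      ∫ t in (0 : ℝ)..T, ∫ x in Bl n R, ρ ^ 4 * qf n ρ (t, x) ^ 5 * en u (t, x) ≤ c) :
    ∫⁻ p, ENNReal.ofReal (jap p.2 ^ (-1 - 2 * δ) * en u p)
        ∂((volume.restrict (Icc 0 T)).prod (volume.restrict univ))
      ≤ ENNReal.ofReal (mS δ) * ENNReal.ofReal c := by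
  have hen := (en_sm hu).continuous
  set W : ℕ → ℝ × Eu n → ℝ := fun k p => ((2 : ℝ) ^ k) ^ 4 * qf n (2 ^ k) p ^ 5 * en u p with hW
  have hWc : ∀ k, Continuous (W k) := fun k => by
    have := (qf_sm (n := n) (show (0 : ℝ) < 2 ^ k by positivity)).continuous
    fun_prop
  have hW0 : ∀ k p, 0 ≤ W k p := fun k p =>
    mul_nonneg (mul_nonneg (by positivity) (pow_nonneg (qf_pos (by positivity) p).le _))
      (en_nonneg _ _)
  calc ∫⁻ p, ENNReal.ofReal (jap p.2 ^ (-1 - 2 * δ) * en u p)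
        ∂((volume.restrict (Icc 0 T)).prod (volume.restrict univ))
      ≤ ∫⁻ p, ∑' k : ℕ, ENNReal.ofReal (243 * ((2 : ℝ) ^ (-2 * δ)) ^ k) * ENNReal.ofReal (W k p)
        ∂((volume.restrict (Icc 0 T)).prod (volume.restrict univ)) := by
        refine lintegral_mono fun p => ?_
        obtain ⟨k, hk⟩ := exists_scale δ hδ p
        refine le_trans ?_ (ENNReal.le_tsum k)
        rw [← ENNReal.ofReal_mul (by positivity)]
        refine ENNReal.ofReal_le_ofReal ?_
        have := mul_le_mul_of_nonneg_right hk (en_nonneg u p)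
        simp only [hW]
        linarith
    _ = ∑' k : ℕ, ENNReal.ofReal (243 * ((2 : ℝ) ^ (-2 * δ)) ^ k) *
          ∫⁻ p, ENNReal.ofReal (W k p)
            ∂((volume.restrict (Icc 0 T)).prod (volume.restrict univ)) := by
        rw [lintegral_tsum fun k => by have := hWc k; fun_prop]
        refine tsum_congr fun k => ?_
        rw [lintegral_const_mul]
        have := hWc k
        fun_prop
    _ ≤ ∑' k : ℕ, ENNReal.ofReal (243 * ((2 : ℝ) ^ (-2 * δ)) ^ k) * ENNReal.ofReal c := by
        refine ENNReal.tsum_le_tsum fun k => ?_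
        gcongr
        exact lintegral_le_of_balls (hWc k) (hW0 k) hT (hm (2 ^ k) (by positivity))
    _ = _ := by rw [ENNReal.tsum_mul_right, mS_eq hδ]

lemma main_estimate (n : ℕ) (hn : 3 ≤ n) (δ : ℝ) (hδ : 0 < δ) (w : ℝ → Eu n → ℝ)
    (hw : SmoothTX w) (hsupp : ∀ t : ℝ, ∃ R : ℝ, ∀ x : Eu n, R < ‖x‖ → w t x = 0)
    (T : ℝ) (hT : 0 < T) :
    L2st T univ (fun t x => jap x ^ (-(1/2 : ℝ) - δ) * gradMag w t x)
      ≤ ENNReal.ofReal (2 * √(mS δ * mC n) + 1) *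
        (L2x univ (fun x => gradMag w 0 x)
          + ∫⁻ s in Icc (0 : ℝ) T, L2x univ (fun x => dAlembert w s x)) := by
  set u : ℝ × Eu n → ℝ := fun p => w p.1 p.2 with hudef
  have hu : Sm u := hw
  have hgrad : ∀ t x, gradMag w t x = √(en u (t, x)) := fun t x => gradMag_eq hu t x
  have hbox : ∀ t x, dAlembert w t x = box u (t, x) := fun t x => dAlembert_eq hu t x
  have henc := (en_sm hu).continuous
  have hbc := (box_sm hu).continuous
  set A := L2x univ (fun x => gradMag w 0 x) with hA
  set M := ∫⁻ s in Icc (0 : ℝ) T, L2x univ (fun x => dAlembert w s x) with hM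
  by_cases htop : A + M = ∞
  · rw [htop, ENNReal.mul_top]
    · exact le_top
    · have := Real.sqrt_nonneg (mS δ * mC n)
      simp only [ne_eq, ENNReal.ofReal_eq_zero, not_le]
      linarith
  have hAf : A ≠ ∞ := fun h => htop (by simp [h])
  have hMf : M ≠ ∞ := fun h => htop (by simp [h])
  set a := A.toReal with ha
  set N := M.toReal with hNdef
  have ha0 : 0 ≤ a := ENNReal.toReal_nonneg
  have hN0 : 0 ≤ N := ENNReal.toReal_nonneg
  have hAa : A = ENNReal.ofReal a := (ENNReal.ofReal_toReal hAf).symm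
  have hMN : M = ENNReal.ofReal N := (ENNReal.ofReal_toReal hMf).symm
  have h0 : ∀ R, ∫ x in Bl n R, en u (0, x) ≤ a ^ 2 := by
    intro R
    rw [← ENNReal.ofReal_le_ofReal_iff (by positivity), ofReal_int_ball henc (en_nonneg u),
      ENNReal.ofReal_pow ha0, ← hAa, hA, L2x, eLpNorm_two_sq]
    simp only [hgrad, Real.sq_sqrt (en_nonneg _ _), Measure.restrict_univ]
    exact setLIntegral_le_lintegral _ _
  have hN : ∀ R, 0 < R →
      ∫ t in (0 : ℝ)..T, √(∫ x in Bl n (2 * R), cut n R (t, x) * box u (t, x) ^ 2) ≤ N := by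
    intro R hR
    have hη := (cut_sm (n := n) R).continuous
    have hfc : Continuous fun p => cut n R p * box u p ^ 2 := by fun_prop
    have hf0 : ∀ p, 0 ≤ cut n R p * box u p ^ 2 := fun p =>
      mul_nonneg (cut_nonneg R p) (sq_nonneg _)
    rw [← ENNReal.ofReal_le_ofReal_iff hN0, ← hMN, hM,
      ofReal_int_time (cont_int hfc _).sqrt (fun t => Real.sqrt_nonneg _) hT.le]
    refine lintegral_mono fun t => ?_
    rw [← ENNReal.pow_le_pow_left_iff two_ne_zero, ← ENNReal.ofReal_pow (Real.sqrt_nonneg _),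
      Real.sq_sqrt (integral_nonneg fun x => hf0 _), ofReal_int_ball hfc hf0, L2x, eLpNorm_two_sq,
      Measure.restrict_univ]
    refine (setLIntegral_le_lintegral _ _).trans (lintegral_mono fun x => ?_)
    rw [hbox]
    exact ENNReal.ofReal_le_ofReal (mul_le_of_le_one_left (sq_nonneg _) (cut_le_one _ _))
  set B := a + 2 * N with hB
  have hB0 : 0 ≤ B := by positivity
  have hmor : ∀ ρ, 0 < ρ → ∀ R, ∫ t in (0 : ℝ)..T, ∫ x in Bl n R,
      ρ ^ 4 * qf n ρ (t, x) ^ 5 * en u (t, x) ≤ mC n * B ^ 2 := fun ρ hρ R =>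
    morawetz hn hρ hu hT.le hB0
      (fun t ht R' => energy_bound hu hT.le ha0 hN0 h0 hN ht R')
      (fun R hR => (hN R hR).trans (by linarith)) hsupp R
  have hmain := weighted_le hδ hu hT.le hmor
  rw [← ENNReal.pow_le_pow_left_iff two_ne_zero, L2st, eLpNorm_two_sq]
  have hpt : ∀ p : ℝ × Eu n, (jap p.2 ^ (-(1/2 : ℝ) - δ) * gradMag w p.1 p.2) ^ 2
      = jap p.2 ^ (-1 - 2 * δ) * en u p := by
    intro p
    rw [hgrad, mul_pow, Real.sq_sqrt (en_nonneg _ _), ← Real.rpow_natCast, ← Real.rpow_mul]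
    · congr 2
      push_cast
      ring
    · exact Real.sqrt_nonneg _
  simp only [hpt]
  refine hmain.trans ?_
  rw [← ENNReal.ofReal_mul (mS_nonneg δ), hAa, hMN, ← ENNReal.ofReal_add ha0 hN0,
    ← ENNReal.ofReal_mul (by positivity), ← ENNReal.ofReal_pow (by positivity)]
  refine ENNReal.ofReal_le_ofReal ?_
  have hc0 : 0 ≤ mS δ * mC n := mul_nonneg (mS_nonneg δ) (mC_nonneg n)
  set s := √(mS δ * mC n) with hs
  have hs0 : 0 ≤ s := Real.sqrt_nonneg _
  have hs2 : mS δ * mC n = s ^ 2 := (Real.sq_sqrt hc0).symm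
  rw [← mul_assoc, hs2, ← mul_pow]
  refine pow_le_pow_left₀ (by positivity) ?_ 2
  nlinarith [mul_nonneg hs0 ha0, mul_nonneg hs0 hN0]

/-- Localized energy estimate in ℝ₊ × ℝⁿ, n ≥ 3. -/
theorem localized_energy_estimate (n : ℕ) (hn : 3 ≤ n) (δ : ℝ) (hδ : 0 < δ) :
    ∃ C : ℝ, 0 < C ∧ ∀ (w F : ℝ → Eu n → ℝ), SmoothTX w →
      (∀ t : ℝ, 0 ≤ t → ∀ x, dAlembert w t x = F t x) →
      (∀ t : ℝ, ∃ R : ℝ, ∀ x : Eu n, R < ‖x‖ → w t x = 0) →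
      ∀ T : ℝ, 0 < T →
        L2st T univ (fun t x => jap x ^ (-(1/2 : ℝ) - δ) * gradMag w t x)
          ≤ ENNReal.ofReal C *
            (L2x univ (fun x => gradMag w 0 x)
              + ∫⁻ s in Icc (0 : ℝ) T, L2x univ (fun x => dAlembert w s x)) := by
  refine ⟨2 * √(mS δ * mC n) + 1, by positivity, fun w F hw _ hsupp T hT => ?_⟩
  exact main_estimate n hn δ hδ w hw hsupp T hT
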